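/- arXiv:2310.17635 — 3 statements merged into one kernel-verified Lean document; each statement's English description precedes it below -/
import Mathlib

section
/- Fix d > 0. Let A be an n×n random matrix with independent Ber(d/n) entries. Let ℓ = ⌊(log n)²⌋ and let B be an n×n random matrix with independent {0,1}-entries where B_{ij} = 1 with probability d/n if max(i,j) ≤ n−ℓ and with probability √(log n)/n otherwise. Let P_σ be a uniformly random n×n permutation matrix, independent of B. Then for all sufficiently large n, the total variation distance between the law of A and the law of P_σ^T B P_σ is at most n^{−1/4}. -/
open MeasureTheory Matrix

/-- The Bernoulli measure on `ℝ`, putting mass `p` at `1` and mass `1 - p` at `0`. -/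
noncomputable def bernoulliR (p : ℝ) : Measure ℝ :=
  ENNReal.ofReal p • Measure.dirac 1 + ENNReal.ofReal (1 - p) • Measure.dirac 0

/-- The law of an `n × n` matrix with iid `Ber(p)` entries. -/
noncomputable def iidMatrixLawR (n : ℕ) (p : ℝ) : Measure (Fin n → Fin n → ℝ) :=
  Measure.pi fun _ => Measure.pi fun _ => bernoulliR p

/-- The law of the matrix `B`: entries are independent, equal to `1` with probability `d/n`
if `max(i,j) ≤ n - ℓ` (with `ℓ = ⌊(log n)²⌋`, indices being `1`-based) and with probability
`√(log n)/n` otherwise. -/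
noncomputable def lawB (n : ℕ) (d : ℝ) : Measure (Fin n → Fin n → ℝ) :=
  Measure.pi fun i => Measure.pi fun j =>
    if (i : ℕ) + 1 ≤ n - ⌊(Real.log n) ^ 2⌋₊ ∧ (j : ℕ) + 1 ≤ n - ⌊(Real.log n) ^ 2⌋₊ then
      bernoulliR (d / n)
    else bernoulliR (Real.sqrt (Real.log n) / n)

noncomputable instance (n : ℕ) : MeasurableSpace (Equiv.Perm (Fin n)) := ⊤

/-- The uniform probability measure on permutations of `[n]`. -/
noncomputable def uniformPerm (n : ℕ) : Measure (Equiv.Perm (Fin n)) :=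
  (Fintype.card (Equiv.Perm (Fin n)) : ENNReal)⁻¹ • Measure.count

/-- The law of `P_σᵀ B P_σ` where `σ` is a uniformly random permutation independent of `B`. -/
noncomputable def lawConjB (n : ℕ) (d : ℝ) : Measure (Fin n → Fin n → ℝ) :=
  ((uniformPerm n).prod (lawB n d)).map
    (fun p => fun i j => ((p.1.permMatrix ℝ)ᵀ * Matrix.of p.2 * p.1.permMatrix ℝ) i j)

/-!
The last `ℓ` vertices of `B` are *hubs*, whose rows and columns have the larger success probability
`q = √(log n) / n` instead of `p = d / n`. After conjugation the hub set is a uniformly random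
`ℓ`-set, which can be revealed one vertex at a time, each new hub `v` being uniform among the
vertices outside the current hub set `S`. So it suffices to bound by about `n ^ (-0.29)` the total
variation cost of one such step.

Turning `v` into a hub multiplies the law by the likelihood ratio `L_v` of the entries in row and
column `v`, hence turning a random vertex into a hub multiplies it by the average of the `L_v`. The
second moment of `L_v` is `exp(Θ(log n))`, too large to be used directly, so `L_v` is truncated at
`T = n ^ (2 / 5)`. A moment of order `1 + s` with `s = 3 / 4` is `n ^ o(1)`, which makes the mass
lost in truncation at most `n ^ (-3 / 10 + o(1))`. The truncated ratios have variance at most `T`,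
and for `v ≠ w` they share only the entries `(v, w)` and `(w, v)`, both of which vanish with
probability `1 - O(1 / n)`, so that their covariance is `O(log n / n)`. By Cauchy–Schwarz the
average deviates from its mean by `√(T / n + O(log n / n)) = O(n ^ (-3 / 10))` in `L¹`.
-/

open ProbabilityTheory Finset unitInterval
open scoped BigOperators

section SecondMoment

lemma integral_finsetExpect {Ω ι : Type*} [MeasurableSpace Ω] {μ : Measure Ω} (V : Finset ι)
    {f : ι → Ω → ℝ} (hf : ∀ v ∈ V, Integrable (f v) μ) :
    ∫ ω, 𝔼 v ∈ V, f v ω ∂μ = 𝔼 v ∈ V, ∫ ω, f v ω ∂μ := by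
  simp only [expect_eq_sum_div_card, integral_div, integral_finsetSum V hf]

variable {Ω : Type*} [MeasurableSpace Ω] {μ : Measure Ω} [IsProbabilityMeasure μ]

lemma integral_abs_sub_integral_le_sqrt_variance {X : Ω → ℝ} (hX : MemLp X 2 μ) :
    ∫ ω, |X ω - ∫ ω', X ω' ∂μ| ∂μ ≤ √Var[X; μ] := by
  have hY : MemLp (fun ω ↦ |X ω - ∫ ω', X ω' ∂μ|) 2 μ := (hX.sub (memLp_const _)).abs
  have hvar := variance_nonneg (fun ω ↦ |X ω - ∫ ω', X ω' ∂μ|) μ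
  rw [variance_eq_sub hY] at hvar
  simp only [Pi.pow_apply, sq_abs] at hvar
  rw [variance_eq_integral hX.aemeasurable]
  exact Real.le_sqrt_of_sq_le (by linarith)

lemma abs_setIntegral_sub_le_of_truncation {L X : Ω → ℝ} (hL : Integrable L μ)
    (hX : MemLp X 2 μ) (hXL : X ≤ L) (hL_one : ∫ ω, L ω ∂μ = 1) {δ : ℝ}
    (hδ : 1 - δ ≤ ∫ ω, X ω ∂μ) (E : Set Ω) :
    |∫ ω in E, L ω ∂μ - μ.real E| ≤ δ + √Var[X; μ] := by
  have hXi : Integrable X μ := hX.integrable one_le_two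
  set m := ∫ ω, X ω ∂μ
  have loss_nonneg : 0 ≤ ∫ ω in E, (L ω - X ω) ∂μ :=
    integral_nonneg fun ω ↦ sub_nonneg.2 (hXL ω)
  have loss_le : ∫ ω in E, (L ω - X ω) ∂μ ≤ 1 - m := by
    rw [← hL_one, ← integral_sub hL hXi]
    exact setIntegral_le_integral (hL.sub hXi) (.of_forall fun ω ↦ sub_nonneg.2 (hXL ω))
  have fluctuation_le : |∫ ω in E, (X ω - m) ∂μ| ≤ √Var[X; μ] :=
    (abs_integral_le_integral_abs.trans (setIntegral_le_integral
      (hXi.sub (integrable_const m)).abs (.of_forall fun _ ↦ abs_nonneg _))).trans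
      (integral_abs_sub_integral_le_sqrt_variance hX)
  have decomposition : ∫ ω in E, L ω ∂μ - μ.real E =
      ∫ ω in E, (L ω - X ω) ∂μ + ∫ ω in E, (X ω - m) ∂μ - μ.real E * (1 - m) := by
    rw [integral_sub hL.integrableOn hXi.integrableOn,
      integral_sub hXi.integrableOn (integrable_const m), setIntegral_const, smul_eq_mul]
    ring
  have hm : 0 ≤ 1 - m := loss_nonneg.trans loss_le
  have deficit_nonneg : 0 ≤ μ.real E * (1 - m) := mul_nonneg measureReal_nonneg hm
  have deficit_le : μ.real E * (1 - m) ≤ 1 - m := mul_le_of_le_one_left hm measureReal_le_one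
  rw [decomposition, abs_le]
  constructor <;> linarith [abs_le.1 fluctuation_le]

lemma variance_expect_le {ι : Type*} {V : Finset ι} (hV : V.Nonempty) {X : ι → Ω → ℝ}
    (hX : ∀ v ∈ V, MemLp (X v) 2 μ) {T η : ℝ} (hη : 0 ≤ η) (hvar : ∀ v ∈ V, Var[X v; μ] ≤ T)
    (hcov : ∀ v ∈ V, ∀ w ∈ V, v ≠ w → cov[X v, X w; μ] ≤ η) :
    Var[fun ω ↦ 𝔼 v ∈ V, X v ω; μ] ≤ T / #V + η := by
  classical
  have : (0 : ℝ) < #V := by exact_mod_cast hV.card_pos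
  have row_le : ∀ v ∈ V, ∑ w ∈ V, cov[X v, X w; μ] ≤ T + #V * η := by
    intro v hv
    rw [← add_sum_erase V _ hv, covariance_self (hX v hv).aemeasurable]
    gcongr
    · exact hvar v hv
    · calc ∑ w ∈ V.erase v, cov[X v, X w; μ]
        _ ≤ ∑ _ ∈ V.erase v, η := sum_le_sum fun w hw ↦
          hcov v hv w (mem_of_mem_erase hw) (ne_of_mem_erase hw).symm
        _ ≤ #V * η := by
          rw [sum_const, nsmul_eq_mul]
          gcongr
          exact erase_subset v V
  simp only [expect_eq_sum_div_card, div_eq_inv_mul, variance_const_mul]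
  rw [variance_fun_sum' hX]
  calc ((#V : ℝ)⁻¹) ^ 2 * ∑ v ∈ V, ∑ w ∈ V, cov[X v, X w; μ]
    _ ≤ ((#V : ℝ)⁻¹) ^ 2 * (#V * (T + #V * η)) := by
      gcongr
      exact (sum_le_sum row_le).trans_eq (by rw [sum_const, nsmul_eq_mul])
    _ = (#V : ℝ)⁻¹ * T + η := by field_simp

end SecondMoment

section Truncation

variable {Ω : Type*} [MeasurableSpace Ω] {μ : Measure Ω} {L : Ω → ℝ} {T : ℝ}

lemma integral_sq_indicator_le (hL : Integrable L μ) (hL0 : 0 ≤ L) (hT : 0 ≤ T) :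
    ∫ ω, ({ω | L ω ≤ T}.indicator L ω) ^ 2 ∂μ ≤ T * ∫ ω, L ω ∂μ := by
  rw [← integral_const_mul]
  refine integral_mono_of_nonneg (.of_forall fun _ ↦ sq_nonneg _) (hL.const_mul T)
    (.of_forall fun ω ↦ ?_)
  by_cases hω : L ω ≤ T
  · simp only [Set.indicator, Set.mem_ofPred_eq, hω, if_true, sq]
    exact mul_le_mul_of_nonneg_right hω (hL0 ω)
  · simpa [hω] using mul_nonneg hT (hL0 ω)

lemma integral_sub_moment_le_integral_indicator (hLm : Measurable L) (hL : Integrable L μ)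
    (hL0 : 0 ≤ L) (hT : 0 < T) {s : ℝ} (hs : 0 ≤ s)
    (hLs : Integrable (fun ω ↦ L ω ^ (1 + s)) μ) :
    ∫ ω, L ω ∂μ - (∫ ω, L ω ^ (1 + s) ∂μ) / T ^ s ≤ ∫ ω, {ω | L ω ≤ T}.indicator L ω ∂μ := by
  rw [← integral_div, ← integral_sub hL (hLs.div_const _)]
  refine integral_mono (hL.sub (hLs.div_const _))
    (hL.indicator (measurableSet_le hLm measurable_const)) fun ω ↦ ?_
  by_cases hω : L ω ≤ T
  · simpa [hω] using div_nonneg (Real.rpow_nonneg (hL0 ω) _) (Real.rpow_nonneg hT.le s)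
  · have hLω : 0 < L ω := hT.trans (not_le.1 hω)
    have : L ω * T ^ s ≤ L ω ^ (1 + s) := by
      rw [Real.rpow_add hLω, Real.rpow_one]
      gcongr
      exact (not_le.1 hω).le
    simpa [hω, le_div_iff₀ (Real.rpow_pos_of_pos hT s)] using this

end Truncation

section DependsOn

variable {ι : Type*} {Ω : ι → Type*} {A B : Finset ι} {F G : (∀ i, Ω i) → ℝ}

lemma dependsOn_finsetProd (A : Finset ι) (g : ∀ i, Ω i → ℝ) :
    DependsOn (fun x : ∀ i, Ω i ↦ ∏ i ∈ A, g i (x i)) A :=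
  fun _ _ h ↦ prod_congr rfl fun i hi ↦ by rw [h i hi]

lemma dependsOn_indicator_pi (A : Finset ι) (s : ∀ i, Set (Ω i)) :
    DependsOn (((A : Set ι).pi s).indicator (1 : (∀ i, Ω i) → ℝ)) A := by
  intro x y h
  simpa only [Set.indicator_pi_one_apply] using
    dependsOn_finsetProd A (fun i ↦ (s i).indicator (1 : Ω i → ℝ)) h

lemma dependsOn_comp_piecewise [DecidableEq ι] (hFA : DependsOn F A) (C : Finset ι)
    (c : ∀ i, Ω i) : DependsOn (fun x ↦ F (C.piecewise c x)) (A \ C : Finset ι) := by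
  intro x y h
  refine hFA fun i hi ↦ ?_
  by_cases hiC : i ∈ C
  · simp [hiC]
  · simpa [hiC] using h i (by simpa [hiC] using hi)

variable [∀ i, MeasurableSpace (Ω i)]

lemma measurable_piecewise_const [DecidableEq ι] (C : Finset ι) (c : ∀ i, Ω i) :
    Measurable fun x : ∀ i, Ω i ↦ C.piecewise c x := by
  refine measurable_pi_lambda _ fun i ↦ ?_
  by_cases hiC : i ∈ C
  · simp [hiC]
  · simpa [hiC] using measurable_pi_apply i

lemma exists_measurable_eq_comp_restrict_of_dependsOn [∀ i, Nonempty (Ω i)] (hF : Measurable F)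
    (hFA : DependsOn F A) : ∃ f : (∀ i : A, Ω i) → ℝ, Measurable f ∧ F = f ∘ A.restrict := by
  classical
  let extend : (∀ i : A, Ω i) → ∀ i, Ω i :=
    fun y i ↦ if h : i ∈ A then y ⟨i, h⟩ else Classical.arbitrary _
  refine ⟨F ∘ extend, hF.comp (measurable_pi_lambda _ fun i ↦ ?_),
    funext fun x ↦ hFA fun i hi ↦ ?_⟩
  · by_cases hi : i ∈ A
    · simpa only [extend, hi, dite_true] using measurable_pi_apply _
    · simpa only [extend, hi, dite_false] using measurable_const
  · simp [extend, Finset.mem_coe.1 hi]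

end DependsOn

section ProductMeasure

variable {ι : Type*} [Fintype ι] {Ω : ι → Type*} [∀ i, MeasurableSpace (Ω i)]
  {ν : ∀ i, Measure (Ω i)} [∀ i, IsProbabilityMeasure (ν i)] {A B : Finset ι}
  {F G : (∀ i, Ω i) → ℝ}

lemma indepFun_of_dependsOn_of_disjoint (hF : Measurable F) (hG : Measurable G)
    (hFA : DependsOn F A) (hGB : DependsOn G B) (hAB : Disjoint A B) :
    IndepFun F G (Measure.pi ν) := by
  have : ∀ i, Nonempty (Ω i) := fun i ↦ nonempty_of_isProbabilityMeasure (ν i)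
  obtain ⟨f, hf, rfl⟩ := exists_measurable_eq_comp_restrict_of_dependsOn hF hFA
  obtain ⟨g, hg, rfl⟩ := exists_measurable_eq_comp_restrict_of_dependsOn hG hGB
  have coordinates : iIndepFun (fun i (x : ∀ i, Ω i) ↦ x i) (Measure.pi ν) :=
    iIndepFun_pi (X := fun _ ↦ id) fun _ ↦ aemeasurable_id
  exact (coordinates.indepFun_finset A B hAB fun i ↦ measurable_pi_apply i).comp hf hg

lemma integral_mul_of_dependsOn_of_disjoint (hF : Measurable F) (hG : Measurable G)
    (hFA : DependsOn F A) (hGB : DependsOn G B) (hAB : Disjoint A B) :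
    ∫ x, F x * G x ∂Measure.pi ν = (∫ x, F x ∂Measure.pi ν) * ∫ x, G x ∂Measure.pi ν :=
  (indepFun_of_dependsOn_of_disjoint hF hG hFA hGB hAB).integral_fun_mul_eq_mul_integral
    hF.aestronglyMeasurable hG.aestronglyMeasurable

lemma integral_finsetProd_eq_prod (A : Finset ι) (g : ∀ i, Ω i → ℝ) :
    ∫ x, ∏ i ∈ A, g i (x i) ∂Measure.pi ν = ∏ i ∈ A, ∫ y, g i y ∂ν i := by
  classical
  have := integral_fintype_prod_eq_prod (μ := ν) (fun i y ↦ if i ∈ A then g i y else 1)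
  simp only [prod_ite_mem, univ_inter] at this
  rw [this, ← prod_subset (subset_univ A)]
  · exact prod_congr rfl fun i hi ↦ by simp [hi]
  · intro i _ hi
    simp [hi]

variable [∀ i, MeasurableSingletonClass (Ω i)] [DecidableEq ι]

lemma setIntegral_pi_singleton_eq_mul (C : Finset ι) (c : ∀ i, Ω i) (hF : Measurable F)
    (hFA : DependsOn F A) :
    ∫ x in (C : Set ι).pi fun i ↦ {c i}, F x ∂Measure.pi ν =
      (Measure.pi ν).real ((C : Set ι).pi fun i ↦ {c i}) *
        ∫ x, F (C.piecewise c x) ∂Measure.pi ν := by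
  have hN : MeasurableSet ((C : Set ι).pi fun i ↦ {c i}) :=
    .pi C.countable_toSet fun i _ ↦ measurableSet_singleton _
  rw [← integral_indicator hN, ← integral_indicator_one hN]
  refine Eq.trans (integral_congr_ae (.of_forall fun x ↦ ?_))
    (integral_mul_of_dependsOn_of_disjoint (measurable_one.indicator hN)
      (hF.comp (measurable_piecewise_const C c)) (dependsOn_indicator_pi C _)
      (dependsOn_comp_piecewise hFA C c) disjoint_sdiff)
  by_cases hx : x ∈ (C : Set ι).pi fun i ↦ {c i}
  · have : C.piecewise c x = x := funext fun i ↦ by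
      by_cases hiC : i ∈ C
      · simpa [hiC] using (hx i hiC).symm
      · simp [hiC]
    simp [Set.indicator_of_mem hx, this]
  · simp [Set.indicator_of_notMem hx]

lemma measureReal_mul_setIntegral_mul_eq {C : Finset ι} (hC : A ∩ B ⊆ C) (c : ∀ i, Ω i)
    (hF : Measurable F) (hG : Measurable G) (hFA : DependsOn F A) (hGB : DependsOn G B) :
    (Measure.pi ν).real ((C : Set ι).pi fun i ↦ {c i}) *
        ∫ x in (C : Set ι).pi fun i ↦ {c i}, F x * G x ∂Measure.pi ν =
      (∫ x in (C : Set ι).pi fun i ↦ {c i}, F x ∂Measure.pi ν) *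
        ∫ x in (C : Set ι).pi fun i ↦ {c i}, G x ∂Measure.pi ν := by
  have hFG : DependsOn (fun x ↦ F x * G x) (A ∪ B : Finset ι) := fun x y h ↦ congrArg₂ (· * ·)
    (hFA fun i hi ↦ h i (mem_union_left B hi)) (hGB fun i hi ↦ h i (mem_union_right A hi))
  have hz := measurable_piecewise_const C c
  have disjoint_off_C : Disjoint (A \ C) (B \ C) := by
    rw [disjoint_left]
    intro i hA hB
    rw [mem_sdiff] at hA hB
    exact hA.2 (hC (mem_inter.2 ⟨hA.1, hB.1⟩))
  have frozen_mul : ∫ x, F (C.piecewise c x) * G (C.piecewise c x) ∂Measure.pi ν =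
      (∫ x, F (C.piecewise c x) ∂Measure.pi ν) * ∫ x, G (C.piecewise c x) ∂Measure.pi ν :=
    integral_mul_of_dependsOn_of_disjoint (hF.comp hz) (hG.comp hz)
      (dependsOn_comp_piecewise hFA C c) (dependsOn_comp_piecewise hGB C c) disjoint_off_C
  rw [setIntegral_pi_singleton_eq_mul (F := fun x ↦ F x * G x) C c (hF.mul hG) hFG,
    setIntegral_pi_singleton_eq_mul C c hF hFA, setIntegral_pi_singleton_eq_mul C c hG hGB,
    frozen_mul]
  ring

lemma covariance_le_of_dependsOn {C : Finset ι} (hC : A ∩ B ⊆ C) (c : ∀ i, Ω i)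
    (hF : Measurable F) (hG : Measurable G) (hFA : DependsOn F A) (hGB : DependsOn G B)
    (hF0 : 0 ≤ F) (hG0 : 0 ≤ G) (hF2 : MemLp F 2 (Measure.pi ν)) (hG2 : MemLp G 2 (Measure.pi ν))
    (hF1 : ∫ x, F x ∂Measure.pi ν ≤ 1) (hG1 : ∫ x, G x ∂Measure.pi ν ≤ 1)
    (hN : 1 / 2 ≤ (Measure.pi ν).real ((C : Set ι).pi fun i ↦ {c i})) :
    cov[F, G; Measure.pi ν] ≤
      2 * (1 - (Measure.pi ν).real ((C : Set ι).pi fun i ↦ {c i})) +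
        ∫ x in ((C : Set ι).pi fun i ↦ {c i})ᶜ, F x * G x ∂Measure.pi ν := by
  have decoupled := measureReal_mul_setIntegral_mul_eq (ν := ν) hC c hF hG hFA hGB
  set N := (C : Set ι).pi fun i ↦ {c i}
  have hNm : MeasurableSet N := .pi C.countable_toSet fun i _ ↦ measurableSet_singleton _
  set m := (Measure.pi ν).real N
  set EF := ∫ x, F x ∂Measure.pi ν
  set EG := ∫ x, G x ∂Measure.pi ν
  set t := ∫ x in N, F x * G x ∂Measure.pi ν
  have hEF : 0 ≤ EF := integral_nonneg hF0
  have hEG : 0 ≤ EG := integral_nonneg hG0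
  have : 0 ≤ t := integral_nonneg fun x ↦ mul_nonneg (hF0 x) (hG0 x)
  have le_product : m * t ≤ EF * EG := by
    rw [decoupled]
    refine mul_le_mul ?_ ?_ (integral_nonneg hG0) hEF
    · exact setIntegral_le_integral (hF2.integrable one_le_two) (.of_forall hF0)
    · exact setIntegral_le_integral (hG2.integrable one_le_two) (.of_forall hG0)
  have product_le_one : EF * EG ≤ 1 := mul_le_one₀ hF1 hEG hG1
  have m_le_one : m ≤ 1 := measureReal_le_one
  have cov_eq : cov[F, G; Measure.pi ν] =
      t + ∫ x in Nᶜ, F x * G x ∂Measure.pi ν - EF * EG := by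
    rw [covariance_eq_sub hF2 hG2]
    congr 1
    exact (integral_add_compl hNm (hF2.integrable_mul hG2)).symm
  rw [cov_eq]
  nlinarith

end ProductMeasure

section LikelihoodRatio

/-- The law of independent bits `x i`, each equal to `true` with probability `P i`. -/
noncomputable abbrev bernoulliPi {ι : Type*} [Fintype ι] (P : ι → I) : Measure (ι → Bool) :=
  Measure.pi fun i ↦ Ber(true, false, P i)

/-- The density of `Ber(q)` with respect to `Ber(p)` at the bit `b`. -/
noncomputable def bernoulliRatio (p q : ℝ) (b : Bool) : ℝ :=
  if b then q / p else (1 - q) / (1 - p)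

/-- The density at `x` of the law obtained from a product of Bernoulli laws by changing the
success probability of the bits in `A` from `p` to `q`. -/
noncomputable def likelihoodRatio {ι : Type*} (p q : ℝ) (A : Finset ι) (x : ι → Bool) : ℝ :=
  ∏ i ∈ A, bernoulliRatio p q (x i)

variable {p q : I}

lemma bernoulliRatio_nonneg (p q : I) (b : Bool) : 0 ≤ bernoulliRatio p q b := by
  unfold bernoulliRatio
  split_ifs
  · exact div_nonneg q.2.1 p.2.1
  · exact div_nonneg (one_minus_nonneg q) (one_minus_nonneg p)

lemma bernoulliMeasure_real_singleton_eq_mul_bernoulliRatio (hp0 : 0 < p) (hp1 : p < 1)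
    (b : Bool) : Ber(true, false, q).real {b} =
      Ber(true, false, p).real {b} * bernoulliRatio p q b := by
  have hp0' : (p : ℝ) ≠ 0 := (coe_pos.2 hp0).ne'
  have hp1' : 1 - (p : ℝ) ≠ 0 := (sub_pos.2 (coe_lt_one.2 hp1)).ne'
  cases b
  · simpa [bernoulliRatio] using (mul_div_cancel₀ _ hp1').symm
  · simpa [bernoulliRatio] using (mul_div_cancel₀ _ hp0').symm

lemma integral_bernoulliRatio (hp0 : 0 < p) (hp1 : p < 1) :
    ∫ b, bernoulliRatio p q b ∂Ber(true, false, p) = 1 := by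
  have hp0' : (p : ℝ) ≠ 0 := (coe_pos.2 hp0).ne'
  have hp1' : 1 - (p : ℝ) ≠ 0 := (sub_pos.2 (coe_lt_one.2 hp1)).ne'
  simp only [integral_bernoulliMeasure, bernoulliRatio, if_true, Bool.false_eq_true, if_false,
    smul_eq_mul]
  field_simp
  ring

lemma integral_bernoulliRatio_rpow_le (hp0 : 0 < p) (hpq : p ≤ q) (hp1 : p < 1) {s : ℝ}
    (hs : 0 ≤ s) :
    ∫ b, bernoulliRatio p q b ^ (1 + s) ∂Ber(true, false, p) ≤
      Real.exp (q * (q / p : ℝ) ^ s) := by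
  have hp0' : (0 : ℝ) < p := coe_pos.2 hp0
  have hp1' : 0 < 1 - (p : ℝ) := sub_pos.2 (coe_lt_one.2 hp1)
  have hq0 : (0 : ℝ) < q := hp0'.trans_le hpq
  have hρ : 0 < (q / p : ℝ) := by positivity
  have true_term : (p : ℝ) * (q / p : ℝ) ^ (1 + s) = q * (q / p : ℝ) ^ s := by
    rw [Real.rpow_add hρ, Real.rpow_one]
    field_simp
  have false_term : (1 - p : ℝ) * ((1 - q) / (1 - p) : ℝ) ^ (1 + s) ≤ 1 := by
    have ratio_le_one : ((1 - q) / (1 - p) : ℝ) ≤ 1 := by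
      rw [div_le_one hp1']
      gcongr
    refine mul_le_one₀ (by linarith) (Real.rpow_nonneg ?_ _) (Real.rpow_le_one ?_ ratio_le_one ?_)
    · exact div_nonneg (one_minus_nonneg q) hp1'.le
    · exact div_nonneg (one_minus_nonneg q) hp1'.le
    · linarith
  calc ∫ b, bernoulliRatio p q b ^ (1 + s) ∂Ber(true, false, p)
    _ = (p : ℝ) * (q / p : ℝ) ^ (1 + s) + (1 - p : ℝ) * ((1 - q) / (1 - p) : ℝ) ^ (1 + s) := by
      simp [integral_bernoulliMeasure, bernoulliRatio]
    _ ≤ q * (q / p : ℝ) ^ s + 1 := by rw [true_term]; gcongr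
    _ ≤ Real.exp (q * (q / p : ℝ) ^ s) := Real.add_one_le_exp _

variable {ι : Type*} {A B : Finset ι}

lemma likelihoodRatio_nonneg (p q : I) (A : Finset ι) : 0 ≤ likelihoodRatio (p : ℝ) q A :=
  fun x ↦ prod_nonneg fun i _ ↦ bernoulliRatio_nonneg p q (x i)

variable [Fintype ι] {P : ι → I}

lemma bernoulliPi_real_eq_setIntegral_likelihoodRatio {P' : ι → I} (hp0 : 0 < p) (hp1 : p < 1)
    (hP : ∀ i ∈ A, P i = p) (hP' : ∀ i ∈ A, P' i = q) (hoff : ∀ i ∉ A, P' i = P i)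
    (E : Set (ι → Bool)) :
    (bernoulliPi P').real E = ∫ x in E, likelihoodRatio p q A x ∂bernoulliPi P := by
  classical
  have density : ∀ x, (bernoulliPi P').real {x} =
      (bernoulliPi P).real {x} * likelihoodRatio p q A x := by
    intro x
    have indicator_ratio : likelihoodRatio p q A x =
        ∏ i, if i ∈ A then bernoulliRatio p q (x i) else 1 := by
      simp [likelihoodRatio, prod_ite_mem]
    rw [indicator_ratio, measureReal_def, measureReal_def, Measure.pi_singleton,
      Measure.pi_singleton, ENNReal.toReal_prod, ENNReal.toReal_prod, ← prod_mul_distrib]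
    refine prod_congr rfl fun i _ ↦ ?_
    by_cases hi : i ∈ A
    · simpa [hi, hP i hi, hP' i hi, measureReal_def] using
        bernoulliMeasure_real_singleton_eq_mul_bernoulliRatio (q := q) hp0 hp1 (x i)
    · simp [hi, hoff i hi]
  have hE : MeasurableSet E := .of_discrete
  rw [← integral_indicator_one hE, ← integral_indicator hE, integral_fintype .of_finite,
    integral_fintype .of_finite]
  refine sum_congr rfl fun x _ ↦ ?_
  by_cases hx : x ∈ E <;> simp [hx, density]

lemma integral_likelihoodRatio (hp0 : 0 < p) (hp1 : p < 1) (hP : ∀ i ∈ A, P i = p) :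
    ∫ x, likelihoodRatio p q A x ∂bernoulliPi P = 1 := by
  unfold likelihoodRatio
  rw [integral_finsetProd_eq_prod]
  exact prod_eq_one fun i hi ↦ by rw [hP i hi, integral_bernoulliRatio hp0 hp1]

lemma integral_likelihoodRatio_rpow_le (hp0 : 0 < p) (hpq : p ≤ q) (hp1 : p < 1)
    (hP : ∀ i ∈ A, P i = p) {s : ℝ} (hs : 0 ≤ s) :
    ∫ x, likelihoodRatio p q A x ^ (1 + s) ∂bernoulliPi P ≤
      Real.exp (#A * (q * (q / p : ℝ) ^ s)) := by
  simp only [likelihoodRatio, ← Real.finsetProd_rpow _ _ fun _ _ ↦ bernoulliRatio_nonneg p q _]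
  rw [integral_finsetProd_eq_prod A (fun _ b ↦ bernoulliRatio p q b ^ (1 + s)), Real.exp_nat_mul,
    ← prod_const]
  refine prod_le_prod (fun i _ ↦ integral_nonneg fun b ↦
    Real.rpow_nonneg (bernoulliRatio_nonneg p q b) _) fun i hi ↦ ?_
  rw [hP i hi]
  exact integral_bernoulliRatio_rpow_le hp0 hpq hp1 hs

lemma integral_prod_mul_likelihoodRatio_mul [DecidableEq ι] (hp0 : 0 < p) (hp1 : p < 1)
    (hPA : ∀ i ∈ A, P i = p) (hPB : ∀ i ∈ B, P i = p) (u : Bool → ℝ) :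
    ∫ x, (∏ i ∈ A ∩ B, u (x i)) * (likelihoodRatio p q A x * likelihoodRatio p q B x)
        ∂bernoulliPi P =
      (∫ b, u b * bernoulliRatio p q b ^ 2 ∂Ber(true, false, p)) ^ #(A ∩ B) := by
  let g : ι → Bool → ℝ := fun i b ↦
    (if i ∈ A ∩ B then u b * bernoulliRatio p q b else 1) * bernoulliRatio p q b
  have merged : ∀ x : ι → Bool, (∏ i ∈ A ∩ B, u (x i)) *
      (likelihoodRatio p q A x * likelihoodRatio p q B x) = ∏ i ∈ A ∪ B, g i (x i) := by
    intro x
    simp only [g, likelihoodRatio]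
    rw [← prod_union_inter, prod_mul_distrib, prod_ite_mem,
      inter_eq_right.2 (inter_subset_left.trans subset_union_left), prod_mul_distrib]
    ring
  simp only [merged]
  rw [integral_finsetProd_eq_prod, ← prod_const,
    ← prod_subset (inter_subset_left.trans subset_union_left : A ∩ B ⊆ A ∪ B)]
  · refine prod_congr rfl fun i hi ↦ ?_
    simp only [g, hi, if_true, hPA i (mem_inter.1 hi).1, mul_assoc, sq]
  · intro i hi hiC
    have : P i = p := (mem_union.1 hi).elim (hPA i) (hPB i)
    simp only [g, hiC, if_false, one_mul, this, integral_bernoulliRatio hp0 hp1]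

end LikelihoodRatio

section TruncatedRatio

/-- The likelihood ratio cut off to `0` wherever it exceeds `T`; unlike the likelihood ratio, it
has a second moment of order `T`. -/
noncomputable def truncatedRatio {ι : Type*} (p q T : ℝ) (A : Finset ι) : (ι → Bool) → ℝ :=
  {x | likelihoodRatio p q A x ≤ T}.indicator (likelihoodRatio p q A)

variable {ι : Type*} {A B : Finset ι} {p q : I} {T : ℝ}

lemma truncatedRatio_nonneg (p q : I) (T : ℝ) (A : Finset ι) : 0 ≤ truncatedRatio p q T A :=
  Set.indicator_nonneg fun x _ ↦ likelihoodRatio_nonneg p q A x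

lemma truncatedRatio_le_likelihoodRatio (p q : I) (T : ℝ) (A : Finset ι) :
    truncatedRatio p q T A ≤ likelihoodRatio p q A :=
  Set.indicator_le_self' fun x _ ↦ likelihoodRatio_nonneg p q A x

lemma dependsOn_truncatedRatio (p q T : ℝ) (A : Finset ι) :
    DependsOn (truncatedRatio p q T A) A := by
  classical
  intro x y h
  have : likelihoodRatio p q A x = likelihoodRatio p q A y :=
    dependsOn_finsetProd A (fun _ ↦ bernoulliRatio p q) h
  simp only [truncatedRatio, Set.indicator_apply, Set.mem_ofPred_eq, this]

variable [Fintype ι] {P : ι → I}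

lemma integral_truncatedRatio_le_one (hp0 : 0 < p) (hp1 : p < 1) (hP : ∀ i ∈ A, P i = p) :
    ∫ x, truncatedRatio p q T A x ∂bernoulliPi P ≤ 1 :=
  (integral_mono .of_finite .of_finite (truncatedRatio_le_likelihoodRatio p q T A)).trans_eq
    (integral_likelihoodRatio hp0 hp1 hP)

lemma variance_truncatedRatio_le (hp0 : 0 < p) (hp1 : p < 1) (hP : ∀ i ∈ A, P i = p)
    (hT : 0 ≤ T) : Var[truncatedRatio p q T A; bernoulliPi P] ≤ T := by
  refine (variance_le_expectation_sq (by fun_prop)).trans ?_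
  have := integral_sq_indicator_le (μ := bernoulliPi P) .of_finite (likelihoodRatio_nonneg p q A) hT
  rwa [integral_likelihoodRatio hp0 hp1 hP, mul_one] at this

lemma one_sub_le_integral_truncatedRatio (hp0 : 0 < p) (hpq : p ≤ q) (hp1 : p < 1)
    (hP : ∀ i ∈ A, P i = p) (hT : 0 < T) {s : ℝ} (hs : 0 ≤ s) :
    1 - Real.exp (#A * (q * (q / p : ℝ) ^ s)) / T ^ s ≤
      ∫ x, truncatedRatio p q T A x ∂bernoulliPi P := by
  have := integral_sub_moment_le_integral_indicator (μ := bernoulliPi P) .of_discrete .of_finite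
    (likelihoodRatio_nonneg p q A) hT hs .of_finite
  rw [integral_likelihoodRatio hp0 hp1 hP] at this
  refine le_trans ?_ this
  gcongr
  exact integral_likelihoodRatio_rpow_le hp0 hpq hp1 hP hs

lemma bernoulliPi_real_pi_false {C : Finset ι} (hP : ∀ i ∈ C, P i = p) :
    (bernoulliPi P).real ((C : Set ι).pi fun _ ↦ {false}) = (1 - p : ℝ) ^ #C := by
  rw [← integral_indicator_one .of_discrete]
  simp only [Set.indicator_pi_one_apply]
  rw [integral_finsetProd_eq_prod C (fun _ ↦ ({false} : Set Bool).indicator 1), ← prod_const]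
  exact prod_congr rfl fun i hi ↦ by simp [hP i hi, integral_bernoulliMeasure]

lemma setIntegral_compl_pi_false_likelihoodRatio_mul [DecidableEq ι] (hp0 : 0 < p) (hp1 : p < 1)
    (hPA : ∀ i ∈ A, P i = p) (hPB : ∀ i ∈ B, P i = p) :
    ∫ x in (((A ∩ B : Finset ι) : Set ι).pi fun _ ↦ {false})ᶜ,
        likelihoodRatio p q A x * likelihoodRatio p q B x ∂bernoulliPi P =
      (p * (q / p : ℝ) ^ 2 + (1 - q : ℝ) ^ 2 / (1 - p)) ^ #(A ∩ B) -
        ((1 - q : ℝ) ^ 2 / (1 - p)) ^ #(A ∩ B) := by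
  have hp1' : 1 - (p : ℝ) ≠ 0 := (sub_pos.2 (coe_lt_one.2 hp1)).ne'
  have weighted := integral_prod_mul_likelihoodRatio_mul (q := q) hp0 hp1 hPA hPB
  set N : Set (ι → Bool) := ((A ∩ B : Finset ι) : Set ι).pi fun _ ↦ {false}
  have total : ∫ x, likelihoodRatio p q A x * likelihoodRatio p q B x ∂bernoulliPi P =
      (p * (q / p : ℝ) ^ 2 + (1 - q : ℝ) ^ 2 / (1 - p)) ^ #(A ∩ B) := by
    have := weighted fun _ ↦ 1
    simp only [prod_const_one, one_mul, integral_bernoulliMeasure] at this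
    rw [this]
    simp only [bernoulliRatio, if_true, Bool.false_eq_true, if_false, smul_eq_mul]
    field_simp
  have on_false : ∫ x in N, likelihoodRatio p q A x * likelihoodRatio p q B x ∂bernoulliPi P =
      ((1 - q : ℝ) ^ 2 / (1 - p)) ^ #(A ∩ B) := by
    have := weighted (({false} : Set Bool).indicator 1)
    simp only [integral_bernoulliMeasure,
      ← Set.indicator_pi_one_apply (A ∩ B) (fun _ ↦ ({false} : Set Bool))] at this
    rw [← integral_indicator .of_discrete]
    refine (integral_congr_ae (.of_forall fun x ↦ ?_)).trans (this.trans ?_)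
    · change N.indicator _ x = N.indicator 1 x * _
      by_cases hx : x ∈ N <;> simp [hx]
    · congr 1
      simp only [bernoulliRatio, Set.indicator_apply, Set.mem_singleton_iff, if_true,
        Bool.true_eq_false, Bool.false_eq_true, if_false, Pi.one_apply, smul_eq_mul]
      field_simp
      ring
  rw [← total, ← on_false]
  exact setIntegral_compl .of_discrete .of_finite

lemma covariance_truncatedRatio_le [DecidableEq ι] (hp0 : 0 < p) (hpq : p ≤ q)
    (hp4 : (p : ℝ) ≤ 1 / 4) (hPA : ∀ i ∈ A, P i = p) (hPB : ∀ i ∈ B, P i = p)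
    (hAB : #(A ∩ B) = 2) :
    cov[truncatedRatio p q T A, truncatedRatio p q T B; bernoulliPi P] ≤
      4 * p + p * (q / p : ℝ) ^ 2 * (2 + p * (q / p : ℝ) ^ 2) := by
  have hp1 : p < 1 := coe_lt_one.1 (by linarith)
  have cov_le := covariance_le_of_dependsOn (ν := fun i ↦ Ber(true, false, P i)) subset_rfl
    (fun _ ↦ false) .of_discrete .of_discrete (dependsOn_truncatedRatio p q T A)
    (dependsOn_truncatedRatio p q T B) (truncatedRatio_nonneg p q T A)
    (truncatedRatio_nonneg p q T B) .of_discrete .of_discrete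
    (integral_truncatedRatio_le_one hp0 hp1 hPA) (integral_truncatedRatio_le_one hp0 hp1 hPB)
  have untruncate : ∀ N : Set (ι → Bool),
      ∫ x in N, truncatedRatio p q T A x * truncatedRatio p q T B x ∂bernoulliPi P ≤
        ∫ x in N, likelihoodRatio p q A x * likelihoodRatio p q B x ∂bernoulliPi P := fun N ↦
    integral_mono .of_finite .of_finite fun x ↦
      mul_le_mul (truncatedRatio_le_likelihoodRatio p q T A x)
        (truncatedRatio_le_likelihoodRatio p q T B x) (truncatedRatio_nonneg p q T B x)
        (likelihoodRatio_nonneg p q A x)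
  rw [bernoulliPi_real_pi_false fun i hi ↦ hPA i (mem_inter.1 hi).1, hAB] at cov_le
  refine (cov_le (by nlinarith)).trans ?_
  refine (add_le_add_right (untruncate _) _).trans ?_
  rw [setIntegral_compl_pi_false_likelihoodRatio_mul hp0 hp1 hPA hPB, hAB]
  have false_mass_le_one : (1 - q : ℝ) ^ 2 / (1 - p) ≤ 1 := by
    rw [div_le_one (by linarith)]
    calc (1 - q : ℝ) ^ 2
      _ ≤ 1 - q := pow_le_of_le_one (one_minus_nonneg q) (one_minus_le_one q) two_ne_zero
      _ ≤ 1 - p := by gcongr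
  have : 0 ≤ p * (q / p : ℝ) ^ 2 := mul_nonneg p.2.1 (sq_nonneg _)
  nlinarith [mul_nonneg this (sub_nonneg.2 false_mass_le_one), sq_nonneg (p : ℝ)]

end TruncatedRatio

section HubMatrix

variable {α : Type*} [DecidableEq α] {p q : I}

/-- The success probabilities of the entries of a random bit matrix with hub set `S`: `q` in the
rows and columns indexed by `S`, and `p` elsewhere. -/
def hubProb (p q : I) (S : Finset α) (e : α × α) : I :=
  if e.1 ∈ S ∨ e.2 ∈ S then q else p

lemma hubProb_empty (p q : I) : hubProb p q (∅ : Finset α) = fun _ ↦ p := by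
  ext e
  simp [hubProb]

variable [Fintype α] {S : Finset α} {v w : α} {e : α × α}

/-- The positions in row `v` or column `v` that avoid the rows and columns of the hub set `S`:
these are the entries whose law changes when `v` becomes a hub. -/
def hubCross (S : Finset α) (v : α) : Finset (α × α) :=
  {e | e.1 ∉ S ∧ e.2 ∉ S ∧ (e.1 = v ∨ e.2 = v)}

lemma hubProb_of_mem_hubCross (he : e ∈ hubCross S v) : hubProb p q S e = p := by
  simp only [hubCross, mem_filter_univ] at he
  simp [hubProb, he.1, he.2.1]

lemma hubProb_insert_of_mem_hubCross (he : e ∈ hubCross S v) :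
    hubProb p q (insert v S) e = q := by
  simp only [hubCross, mem_filter_univ] at he
  simp only [hubProb, mem_insert]
  grind

lemma hubProb_insert_of_notMem_hubCross (he : e ∉ hubCross S v) :
    hubProb p q (insert v S) e = hubProb p q S e := by
  simp only [hubCross, mem_filter_univ] at he
  simp only [hubProb, mem_insert]
  grind

lemma card_hubCross_le (S : Finset α) (v : α) : #(hubCross S v) ≤ 2 * Fintype.card α := by
  have cover : hubCross S v ⊆ ({v} ×ˢ univ) ∪ (univ ×ˢ {v}) := by
    intro e he
    simp only [hubCross, mem_filter_univ] at he
    simpa only [mem_union, mem_product, mem_singleton, mem_univ, and_true, true_and] using he.2.2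
  calc #(hubCross S v)
    _ ≤ #({v} ×ˢ (univ : Finset α)) + #((univ : Finset α) ×ˢ {v}) :=
      (card_le_card cover).trans (card_union_le _ _)
    _ = 2 * Fintype.card α := by simp [two_mul]

lemma card_hubCross_inter_hubCross (hv : v ∉ S) (hw : w ∉ S) (hvw : v ≠ w) :
    #(hubCross S v ∩ hubCross S w) = 2 := by
  have : hubCross S v ∩ hubCross S w = {(v, w), (w, v)} := by
    ext ⟨i, j⟩
    simp only [hubCross, mem_inter, mem_filter_univ, mem_insert, mem_singleton, Prod.mk.injEq]
    grind
  rw [this, card_pair (by simp [hvw])]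

lemma abs_expect_bernoulliPi_hubProb_insert_sub_le (hp0 : 0 < p) (hpq : p ≤ q)
    (hp4 : (p : ℝ) ≤ 1 / 4) {T s : ℝ} (hT : 0 < T) (hs : 0 ≤ s) (hS : Sᶜ.Nonempty)
    (E : Set (α × α → Bool)) :
    |𝔼 v ∈ Sᶜ, (bernoulliPi (hubProb p q (insert v S))).real E -
        (bernoulliPi (hubProb p q S)).real E| ≤
      Real.exp (2 * Fintype.card α * (q * (q / p : ℝ) ^ s)) / T ^ s +
        √(T / #Sᶜ + (4 * p + p * (q / p : ℝ) ^ 2 * (2 + p * (q / p : ℝ) ^ 2))) := by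
  have hp1 : p < 1 := coe_lt_one.1 (by linarith)
  have hP : ∀ v, ∀ e ∈ hubCross S v, hubProb p q S e = p := fun _ _ ↦ hubProb_of_mem_hubCross
  have change_of_measure : ∀ v, (bernoulliPi (hubProb p q (insert v S))).real E =
      ∫ x in E, likelihoodRatio p q (hubCross S v) x ∂bernoulliPi (hubProb p q S) := fun v ↦
    bernoulliPi_real_eq_setIntegral_likelihoodRatio hp0 hp1 (hP v)
      (fun _ ↦ hubProb_insert_of_mem_hubCross) (fun _ ↦ hubProb_insert_of_notMem_hubCross) E
  have mean_one : 𝔼 v ∈ Sᶜ, ∫ x, likelihoodRatio p q (hubCross S v) x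
      ∂bernoulliPi (hubProb p q S) = 1 := by
    simp only [integral_likelihoodRatio hp0 hp1 (hP _), expect_const hS]
  have loss : 1 - Real.exp (2 * Fintype.card α * (q * (q / p : ℝ) ^ s)) / T ^ s ≤
      𝔼 v ∈ Sᶜ, ∫ x, truncatedRatio p q T (hubCross S v) x ∂bernoulliPi (hubProb p q S) := by
    refine le_expect hS fun v _ ↦ le_trans ?_
      (one_sub_le_integral_truncatedRatio hp0 hpq hp1 (hP v) hT hs)
    have hρ : 0 ≤ (q / p : ℝ) := div_nonneg q.2.1 p.2.1
    have := q.2.1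
    gcongr
    exact_mod_cast card_hubCross_le S v
  have spread := variance_expect_le (μ := bernoulliPi (hubProb p q S)) hS
    (X := fun v ↦ truncatedRatio p q T (hubCross S v)) (T := T)
    (η := 4 * p + p * (q / p : ℝ) ^ 2 * (2 + p * (q / p : ℝ) ^ 2)) (fun _ _ ↦ .of_discrete)
    (by have := p.2.1; positivity)
    (fun v _ ↦ variance_truncatedRatio_le hp0 hp1 (hP v) hT.le)
    (fun v hv w hw hvw ↦ covariance_truncatedRatio_le hp0 hpq hp4 (hP v) (hP w)
      (card_hubCross_inter_hubCross (mem_compl.1 hv) (mem_compl.1 hw) hvw))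
  rw [← integral_finsetExpect _ fun _ _ ↦ .of_finite] at mean_one loss
  simp only [change_of_measure]
  rw [← integral_finsetExpect _ fun _ _ ↦ .of_finite]
  refine (abs_setIntegral_sub_le_of_truncation .of_finite .of_discrete
    (fun x ↦ expect_le_expect fun v _ ↦ truncatedRatio_le_likelihoodRatio p q T _ x)
    mean_one loss E).trans ?_
  gcongr

end HubMatrix

section UniformPermutation

variable {α : Type*} [Fintype α] [DecidableEq α] {S : Finset α}

lemma expect_perm_map_insert (f : Finset α → ℝ) {a : α} (ha : a ∉ S) :
    𝔼 τ : Equiv.Perm α, f ((insert a S).map τ.toEmbedding) =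
      𝔼 τ : Equiv.Perm α, 𝔼 v ∈ (S.map τ.toEmbedding)ᶜ, f (insert v (S.map τ.toEmbedding)) := by
  have swap_invariant : ∀ b ∈ Sᶜ, 𝔼 τ : Equiv.Perm α, f ((insert b S).map τ.toEmbedding) =
      𝔼 τ : Equiv.Perm α, f ((insert a S).map τ.toEmbedding) := by
    intro b hb
    rw [mem_compl] at hb
    have swap_insert : (insert a S).map (Equiv.swap a b).toEmbedding = insert b S := by
      ext c
      simp only [mem_map_equiv, Equiv.symm_swap, mem_insert, Equiv.swap_apply_def]
      grind
    refine expect_equiv (Equiv.mulRight (Equiv.swap a b)) (by simp) fun τ _ ↦ ?_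
    rw [← swap_insert, Finset.map_map]
    rfl
  have reindexed : ∀ τ : Equiv.Perm α,
      𝔼 b ∈ Sᶜ, f ((insert b S).map τ.toEmbedding) =
        𝔼 v ∈ (S.map τ.toEmbedding)ᶜ, f (insert v (S.map τ.toEmbedding)) := fun τ ↦
    expect_equiv τ (by simp) fun b _ ↦ by rw [map_insert, Equiv.coe_toEmbedding]
  simp only [← reindexed]
  rw [expect_comm, expect_congr rfl swap_invariant, expect_const ⟨a, mem_compl.2 ha⟩]

lemma abs_expect_perm_map_sub_le {f : Finset α → ℝ} {ε : ℝ}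
    (hf : ∀ T, #T < #S → |𝔼 v ∈ Tᶜ, f (insert v T) - f T| ≤ ε) :
    |𝔼 τ : Equiv.Perm α, f (S.map τ.toEmbedding) - f ∅| ≤ #S * ε := by
  induction S using Finset.induction_on with
  | empty => simp
  | insert a S ha ih =>
    rw [card_insert_of_notMem ha] at hf ⊢
    have previous := ih fun T hT ↦ hf T (hT.trans (Nat.lt_succ_self _))
    have last : |𝔼 τ : Equiv.Perm α, f ((insert a S).map τ.toEmbedding) -
        𝔼 τ : Equiv.Perm α, f (S.map τ.toEmbedding)| ≤ ε := by
      rw [expect_perm_map_insert f ha, ← expect_sub_distrib]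
      refine (abs_expect_le _ _).trans (expect_le univ_nonempty fun τ _ ↦ hf _ ?_)
      rw [card_map]
      exact Nat.lt_succ_self _
    have := abs_sub_le (𝔼 τ : Equiv.Perm α, f ((insert a S).map τ.toEmbedding))
      (𝔼 τ : Equiv.Perm α, f (S.map τ.toEmbedding)) (f ∅)
    push_cast
    linarith

end UniformPermutation

section PermutedHubs

variable {α : Type*} [Fintype α] [DecidableEq α] {p q : I} {S : Finset α}

lemma abs_expect_bernoulliPi_hubProb_map_sub_le (hp0 : 0 < p) (hpq : p ≤ q)
    (hp4 : (p : ℝ) ≤ 1 / 4) {T s : ℝ} (hT : 0 < T) (hs : 0 ≤ s)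
    (hS : 2 * #S ≤ Fintype.card α) (E : Set (α × α → Bool)) :
    |𝔼 τ : Equiv.Perm α, (bernoulliPi (hubProb p q (S.map τ.toEmbedding))).real E -
        (bernoulliPi fun _ ↦ p).real E| ≤
      #S * (Real.exp (2 * Fintype.card α * (q * (q / p : ℝ) ^ s)) / T ^ s +
        √(2 * T / Fintype.card α +
          (4 * p + p * (q / p : ℝ) ^ 2 * (2 + p * (q / p : ℝ) ^ 2)))) := by
  rw [← hubProb_empty p q]
  refine abs_expect_perm_map_sub_le (f := fun S ↦ (bernoulliPi (hubProb p q S)).real E)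
    fun U hU ↦ ?_
  have half_le : (Fintype.card α : ℝ) ≤ 2 * #Uᶜ := by
    rw [card_compl]
    exact_mod_cast (by lia : Fintype.card α ≤ 2 * (Fintype.card α - #U))
  have card_pos : (0 : ℝ) < Fintype.card α := by exact_mod_cast (by lia : 0 < Fintype.card α)
  have hUc : Uᶜ.Nonempty := by
    rw [← Finset.card_pos]
    exact_mod_cast (by linarith : (0 : ℝ) < #Uᶜ)
  refine (abs_expect_bernoulliPi_hubProb_insert_sub_le hp0 hpq hp4 hT hs hUc E).trans ?_
  have : T / #Uᶜ ≤ 2 * T / Fintype.card α := by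
    rw [div_le_div_iff₀ (by linarith) card_pos]
    nlinarith
  gcongr

end PermutedHubs

section Transfer

lemma map_apply_of_countable {Ω β : Type*} [MeasurableSpace Ω] [MeasurableSpace β] [Countable Ω]
    [MeasurableSingletonClass β] {μ : Measure Ω} {f : Ω → β} (hf : Measurable f) (E : Set β) :
    μ.map f E = μ (f ⁻¹' E) := by
  have range_measurable : MeasurableSet (Set.range f) := (Set.countable_range f).measurableSet
  have ae_mem_range : ∀ᵐ y ∂μ.map f, y ∈ Set.range f :=
    (ae_map_iff hf.aemeasurable range_measurable).2 (.of_forall Set.mem_range_self)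
  have : (E ∩ Set.range f : Set β) =ᵐ[μ.map f] E :=
    inter_ae_eq_left_of_ae_eq_univ (Filter.eventuallyEq_univ.2 ae_mem_range)
  rw [← measure_congr this, Measure.map_apply hf
    ((Set.countable_range f).mono Set.inter_subset_right).measurableSet,
    Set.preimage_inter_range]

lemma bernoulliPi_map_comp_equiv {ι κ : Type*} [Fintype ι] [Fintype κ] (e : ι ≃ κ) (P : ι → I) :
    (bernoulliPi P).map (fun x k ↦ x (e.symm k)) = bernoulliPi (P ∘ e.symm) :=
  (measurePreserving_arrowCongr' (fun i ↦ Ber(true, false, P i))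
    (fun k ↦ Ber(true, false, P (e.symm k))) e (.refl Bool)
    fun i ↦ by rw [Equiv.symm_apply_apply]; exact .id _).map_eq

/-- The real `0`-`1` matrix of a matrix of bits. -/
def bitMatrix {α : Type*} (x : α × α → Bool) : α → α → ℝ := fun i j ↦ if x (i, j) then 1 else 0

lemma bernoulliR_eq_bernoulliMeasure (p : I) : bernoulliR p = Ber(1, 0, p) := by
  rw [bernoulliR, bernoulliMeasure_def, ENNReal.ofReal_eq_coe_nnreal p.2.1,
    ENNReal.ofReal_eq_coe_nnreal (one_minus_nonneg p)]
  rfl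

lemma pi_pi_bernoulliR {α : Type*} [Fintype α] (P : α × α → I) :
    Measure.pi (fun i ↦ Measure.pi fun j ↦ bernoulliR (P (i, j))) =
      (bernoulliPi P).map bitMatrix := by
  have entrywise : Measure.pi (fun e ↦ Ber((1 : ℝ), 0, P e)) =
      (bernoulliPi P).map fun x e ↦ if x e then (1 : ℝ) else 0 := by
    rw [bernoulliPi, Measure.pi_map_pi (f := fun _ (b : Bool) ↦ if b then (1 : ℝ) else 0)
      fun _ ↦ Measurable.of_discrete.aemeasurable]
    simp
  have curried := Measure.infinitePi_map_curry fun i j ↦ Ber((1 : ℝ), 0, P (i, j))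
  simp only [Measure.infinitePi_eq_pi, Prod.mk.eta, entrywise] at curried
  simp only [bernoulliR_eq_bernoulliMeasure, ← curried]
  exact Measure.map_map (MeasurableEquiv.measurable _) .of_discrete

variable {n : ℕ}

lemma permMatrix_transpose_mul_mul_permMatrix_apply (τ : Equiv.Perm (Fin n))
    (y : Fin n → Fin n → ℝ) (i j : Fin n) :
    ((τ.permMatrix ℝ)ᵀ * Matrix.of y * τ.permMatrix ℝ) i j = y (τ.symm i) (τ.symm j) := by
  rw [Matrix.transpose_permMatrix, Equiv.Perm.permMatrix, Equiv.Perm.permMatrix,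
    PEquiv.toMatrix_toPEquiv_mul, PEquiv.mul_toMatrix_toPEquiv]
  rfl

lemma uniformPerm_prod_real_apply {Ω : Type*} [MeasurableSpace Ω] (ν : Measure Ω)
    [IsFiniteMeasure ν] {F : Set (Equiv.Perm (Fin n) × Ω)} (hF : MeasurableSet F) :
    ((uniformPerm n).prod ν).real F = 𝔼 τ : Equiv.Perm (Fin n), ν.real (Prod.mk τ ⁻¹' F) := by
  have : DiscreteMeasurableSpace (Equiv.Perm (Fin n)) := ⟨fun _ ↦ trivial⟩
  rw [measureReal_def, Measure.prod_apply hF, uniformPerm, lintegral_smul_measure, lintegral_count,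
    tsum_fintype, expect_eq_sum_div_card, smul_eq_mul, ENNReal.toReal_mul,
    ENNReal.toReal_sum fun _ _ ↦ measure_ne_top _ _]
  simp [div_eq_inv_mul, measureReal_def]

lemma hubProb_comp_prodCongr_symm {α : Type*} [DecidableEq α] (p q : I) (S : Finset α)
    (τ : Equiv.Perm α) :
    hubProb p q S ∘ (τ.prodCongr τ).symm = hubProb p q (S.map τ.toEmbedding) := by
  ext e
  simp [hubProb, mem_map_equiv]

lemma lawConjB_eq_map {d : ℝ} {P : Fin n × Fin n → I}
    (hB : lawB n d = (bernoulliPi P).map bitMatrix) :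
    lawConjB n d = ((uniformPerm n).prod (bernoulliPi P)).map
      fun z i j ↦ bitMatrix z.2 (z.1.symm i) (z.1.symm j) := by
  have : DiscreteMeasurableSpace (Equiv.Perm (Fin n)) := ⟨fun _ ↦ trivial⟩
  have : SFinite (uniformPerm n) := by unfold uniformPerm; infer_instance
  have conj_measurable : Measurable fun z : Equiv.Perm (Fin n) × (Fin n → Fin n → ℝ) ↦
      fun i j ↦ z.2 (z.1.symm i) (z.1.symm j) :=
    measurable_from_prod_countable_right fun τ ↦ by dsimp only; fun_prop
  have hprod := Measure.map_prod_map (uniformPerm n) (bernoulliPi P) measurable_id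
    (.of_discrete : Measurable (bitMatrix (α := Fin n)))
  rw [Measure.map_id] at hprod
  simp only [lawConjB, permMatrix_transpose_mul_mul_permMatrix_apply]
  rw [hB, hprod, Measure.map_map conj_measurable .of_discrete]
  rfl

lemma toReal_lawConjB_apply {d : ℝ} {p q : I} {S : Finset (Fin n)}
    (hB : lawB n d = (bernoulliPi (hubProb p q S)).map bitMatrix) (E : Set (Fin n → Fin n → ℝ)) :
    (lawConjB n d E).toReal = 𝔼 τ : Equiv.Perm (Fin n),
      (bernoulliPi (hubProb p q (S.map τ.toEmbedding))).real (bitMatrix ⁻¹' E) := by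
  have : DiscreteMeasurableSpace (Equiv.Perm (Fin n)) := ⟨fun _ ↦ trivial⟩
  rw [lawConjB_eq_map hB, map_apply_of_countable .of_discrete, ← measureReal_def,
    uniformPerm_prod_real_apply _ .of_discrete]
  refine expect_congr rfl fun τ _ ↦ ?_
  rw [← hubProb_comp_prodCongr_symm, ← bernoulliPi_map_comp_equiv,
    map_measureReal_apply .of_discrete .of_discrete]
  rfl

lemma toReal_iidMatrixLawR_apply (p : I) (E : Set (Fin n → Fin n → ℝ)) :
    (iidMatrixLawR n p E).toReal = (bernoulliPi fun _ ↦ p).real (bitMatrix ⁻¹' E) := by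
  rw [iidMatrixLawR, pi_pi_bernoulliR fun _ ↦ p, map_apply_of_countable .of_discrete,
    measureReal_def]

lemma card_compl_filter_val_lt_sub_le (n k : ℕ) :
    #({i | (i : ℕ) < n - k} : Finset (Fin n))ᶜ ≤ k := by
  rw [card_compl, Fintype.card_fin, Fin.card_filter_val_lt]
  lia

lemma lawB_eq_map_bitMatrix {d : ℝ} {p q : I} (hp : (p : ℝ) = d / n)
    (hq : (q : ℝ) = √(Real.log n) / n) :
    lawB n d = (bernoulliPi (hubProb p q
      ({i | (i : ℕ) < n - ⌊Real.log n ^ 2⌋₊} : Finset (Fin n))ᶜ)).map bitMatrix := by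
  rw [← pi_pi_bernoulliR, lawB]
  congr! 4 with i j
  simp only [hubProb, ← hp, ← hq, Nat.add_one_le_iff, mem_compl, mem_filter_univ]
  split_ifs <;> grind

end Transfer

section Asymptotics

open Filter Asymptotics

lemma eventually_exp_sqrt_log_mul_rpow_le {d : ℝ} (hd : 0 < d) :
    ∀ᶠ x : ℝ in atTop, Real.exp (2 * √(Real.log x) * (√(Real.log x) / d) ^ (3 / 4 : ℝ)) ≤
      x ^ (1 / 100 : ℝ) := by
  have sublinear : ∀ᶠ y : ℝ in atTop, 2 * y * (y / d) ^ (3 / 4 : ℝ) ≤ y ^ 2 / 100 := by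
    have quarter_power_large := (tendsto_rpow_atTop (by norm_num : (0 : ℝ) < 1 / 4)).comp
      (tendsto_id.atTop_div_const hd) |>.eventually_ge_atTop (200 / d)
    filter_upwards [eventually_gt_atTop 0, quarter_power_large] with y hy hy'
    have hz : 0 < y / d := div_pos hy hd
    have split : (y / d) ^ (3 / 4 : ℝ) * (y / d) ^ (1 / 4 : ℝ) = y / d := by
      rw [← Real.rpow_add hz]
      norm_num
    simp only [Function.comp_apply, id] at hy'
    have : (y / d) ^ (3 / 4 : ℝ) * (200 / d) ≤ y / d :=
      (mul_le_mul_of_nonneg_left hy' (by positivity)).trans_eq split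
    rw [← mul_div_assoc, div_le_div_iff_of_pos_right hd] at this
    nlinarith
  have sqrt_log_tendsto := Real.tendsto_sqrt_atTop.comp Real.tendsto_log_atTop
  filter_upwards [sqrt_log_tendsto.eventually sublinear, eventually_ge_atTop 1] with x hx hx1
  rw [Real.rpow_def_of_pos (by linarith : 0 < x), Real.exp_le_exp]
  rw [Function.comp_apply, Real.sq_sqrt (Real.log_nonneg hx1)] at hx
  linarith

lemma eventually_variance_bound_le {d : ℝ} (hd : 0 < d) :
    ∀ᶠ x : ℝ in atTop, 2 * x ^ (2 / 5 : ℝ) / x + (4 * (d / x) +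
      Real.log x / (d * x) * (2 + Real.log x / (d * x))) ≤ 4 * (x ^ (2 / 5 : ℝ) / x) := by
  have log_small := (isLittleO_log_rpow_atTop (by norm_num : (0 : ℝ) < 2 / 5)).def
    (by positivity : 0 < d / 3)
  have power_large := (tendsto_rpow_atTop (by norm_num : (0 : ℝ) < 2 / 5)).eventually_ge_atTop
    (4 * d)
  filter_upwards [log_small, power_large, eventually_ge_atTop 1] with x hlog hpow hx
  have hx0 : 0 < x := by linarith
  have log_nonneg := Real.log_nonneg hx
  rw [Real.norm_of_nonneg log_nonneg, Real.norm_of_nonneg (by positivity)] at hlog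
  have c_le : 3 * (Real.log x / (d * x)) ≤ x ^ (2 / 5 : ℝ) / x := by
    rw [← mul_div_assoc, div_le_div_iff₀ (by positivity) hx0]
    nlinarith
  have power_le_one : x ^ (2 / 5 : ℝ) / x ≤ 1 := by
    rw [div_le_one hx0]
    exact Real.rpow_le_self_of_one_le hx (by norm_num)
  have c_nonneg : 0 ≤ Real.log x / (d * x) := by positivity
  have : 4 * (d / x) ≤ x ^ (2 / 5 : ℝ) / x := by
    rw [← mul_div_assoc]
    gcongr
  have : 2 * x ^ (2 / 5 : ℝ) / x = 2 * (x ^ (2 / 5 : ℝ) / x) := mul_div_assoc _ _ _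
  nlinarith

lemma eventually_log_sq_mul_rpow_le :
    ∀ᶠ x : ℝ in atTop, Real.log x ^ 2 * (3 * x ^ (-(29 / 100) : ℝ)) ≤ x ^ (-(1 / 4) : ℝ) := by
  have log_sq_small := (isLittleO_log_rpow_rpow_atTop 2 (by norm_num : (0 : ℝ) < 1 / 25)).def
    (by norm_num : (0 : ℝ) < 1 / 3)
  filter_upwards [log_sq_small, eventually_gt_atTop 0] with x hlog hx
  rw [Real.rpow_two, Real.norm_of_nonneg (sq_nonneg _), Real.norm_of_nonneg (by positivity)] at hlog
  calc Real.log x ^ 2 * (3 * x ^ (-(29 / 100) : ℝ))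
    _ ≤ 1 / 3 * x ^ (1 / 25 : ℝ) * (3 * x ^ (-(29 / 100) : ℝ)) := by gcongr
    _ = x ^ (1 / 25 : ℝ) * x ^ (-(29 / 100) : ℝ) := by ring
    _ = x ^ (-(1 / 4) : ℝ) := by
      rw [← Real.rpow_add hx]
      norm_num

lemma sqrt_four_mul_rpow_div_le {x : ℝ} (hx : 1 ≤ x) :
    √(4 * (x ^ (2 / 5 : ℝ) / x)) ≤ 2 * x ^ (-(29 / 100) : ℝ) := by
  have hx0 : 0 < x := by linarith
  rw [Real.sqrt_le_left (by positivity), mul_pow, ← Real.rpow_sub_one hx0.ne',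
    ← Real.rpow_mul_natCast hx0.le]
  gcongr ?_ * ?_
  · norm_num
  · exact Real.rpow_le_rpow_of_exponent_le hx (by norm_num)

lemma eventually_hub_bound_le {d : ℝ} (hd : 0 < d) :
    ∀ᶠ x : ℝ in atTop, Real.log x ^ 2 *
      (Real.exp (2 * x * (√(Real.log x) / x * (√(Real.log x) / x / (d / x)) ^ (3 / 4 : ℝ))) /
          (x ^ (2 / 5 : ℝ)) ^ (3 / 4 : ℝ) +
        √(2 * x ^ (2 / 5 : ℝ) / x + (4 * (d / x) + d / x * (√(Real.log x) / x / (d / x)) ^ 2 *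
          (2 + d / x * (√(Real.log x) / x / (d / x)) ^ 2)))) ≤ x ^ (-(1 / 4) : ℝ) := by
  filter_upwards [eventually_exp_sqrt_log_mul_rpow_le hd, eventually_variance_bound_le hd,
    eventually_log_sq_mul_rpow_le, eventually_ge_atTop 1] with x hexp hvar hfinal hx
  have hx0 : 0 < x := by linarith
  have ratio_eq : √(Real.log x) / x / (d / x) = √(Real.log x) / d := by field_simp
  have excess_eq : d / x * (√(Real.log x) / d) ^ 2 = Real.log x / (d * x) := by
    rw [div_pow, Real.sq_sqrt (Real.log_nonneg hx)]
    field_simp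
  have exponent_eq : 2 * x * (√(Real.log x) / x * (√(Real.log x) / d) ^ (3 / 4 : ℝ)) =
      2 * √(Real.log x) * (√(Real.log x) / d) ^ (3 / 4 : ℝ) := by field_simp
  rw [ratio_eq, excess_eq, exponent_eq]
  refine le_trans ?_ hfinal
  have loss_le : Real.exp (2 * √(Real.log x) * (√(Real.log x) / d) ^ (3 / 4 : ℝ)) /
      (x ^ (2 / 5 : ℝ)) ^ (3 / 4 : ℝ) ≤ x ^ (-(29 / 100) : ℝ) := by
    calc _ ≤ x ^ (1 / 100 : ℝ) / x ^ (3 / 10 : ℝ) := by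
          rw [← Real.rpow_mul hx0.le, show (2 / 5 * (3 / 4) : ℝ) = 3 / 10 by norm_num]
          gcongr
      _ = x ^ (-(29 / 100) : ℝ) := by
        rw [← Real.rpow_sub hx0]
        norm_num
  have spread_le : √(2 * x ^ (2 / 5 : ℝ) / x + (4 * (d / x) +
      Real.log x / (d * x) * (2 + Real.log x / (d * x)))) ≤ 2 * x ^ (-(29 / 100) : ℝ) :=
    (Real.sqrt_le_sqrt hvar).trans (sqrt_four_mul_rpow_div_le hx)
  gcongr
  linarith

lemma eventually_hub_parameters {d : ℝ} (hd : 0 < d) :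
    ∀ᶠ x : ℝ in atTop, 0 < x ∧ d ≤ √(Real.log x) ∧ √(Real.log x) / x ≤ 1 ∧ d / x ≤ 1 / 4 ∧
      2 * Real.log x ^ 2 ≤ x := by
  have sqrt_log_tendsto := Real.tendsto_sqrt_atTop.comp Real.tendsto_log_atTop
  have log_sq_small := (Real.isLittleO_pow_log_id_atTop (n := 2)).def
    (by norm_num : (0 : ℝ) < 1 / 2)
  filter_upwards [sqrt_log_tendsto.eventually_ge_atTop d, log_sq_small, eventually_ge_atTop 1,
    eventually_ge_atTop (4 * d)] with x hlog hlog_sq hx hxd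
  have hx0 : 0 < x := by linarith
  rw [Real.norm_of_nonneg (sq_nonneg _), id, Real.norm_of_nonneg hx0.le] at hlog_sq
  refine ⟨hx0, hlog, ?_, ?_, by linarith⟩
  · rw [div_le_one hx0, Real.sqrt_le_left hx0.le]
    nlinarith [Real.log_le_sub_one_of_pos hx0]
  · rw [div_le_div_iff₀ hx0 four_pos]
    linarith

end Asymptotics

theorem coupling_TV_estimate (d : ℝ) (hd : 0 < d) :
    ∃ N : ℕ, ∀ n : ℕ, N ≤ n →
      ∀ E : Set (Fin n → Fin n → ℝ),
        |(iidMatrixLawR n (d / n) E).toReal - (lawConjB n d E).toReal| ≤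
          (n : ℝ) ^ (-(1 / 4 : ℝ)) := by
  refine Filter.eventually_atTop.1 ?_
  filter_upwards [tendsto_natCast_atTop_atTop.eventually (eventually_hub_parameters hd),
    tendsto_natCast_atTop_atTop.eventually (eventually_hub_bound_le hd)]
    with n ⟨n_pos, d_le, q_le_one, p_le, log_sq_le⟩ bound_le E
  let p : I := ⟨d / n, by positivity, by linarith⟩
  let q : I := ⟨√(Real.log n) / n, by positivity, q_le_one⟩
  have hp0 : 0 < p := div_pos hd n_pos
  have hpq : p ≤ q := div_le_div_of_nonneg_right d_le n_pos.le
  have card_hubs_le := Nat.le_floor_iff (sq_nonneg _) |>.1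
    (card_compl_filter_val_lt_sub_le n ⌊Real.log n ^ 2⌋₊)
  rw [show d / n = p from rfl, toReal_iidMatrixLawR_apply, abs_sub_comm,
    toReal_lawConjB_apply (lawB_eq_map_bitMatrix (p := p) (q := q) rfl rfl)]
  refine (abs_expect_bernoulliPi_hubProb_map_sub_le hp0 hpq p_le
    (T := (n : ℝ) ^ (2 / 5 : ℝ)) (s := 3 / 4) (by positivity) (by norm_num) ?_ _).trans ?_
  · rw [Fintype.card_fin]
    exact_mod_cast (mul_le_mul_of_nonneg_left card_hubs_le two_pos.le).trans log_sq_le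
  · rw [Fintype.card_fin]
    refine le_trans ?_ bound_le
    gcongr
end

section
/- For every η > 0 there exists N such that the following holds for all n ≥ N. Suppose d ∈ [(log n)^{−1/3}, (log n)^{1/3}] and τ ∈ [(log n)^{1/2}/(2n), 2(log n)^{1/2}/n]. Define two probability distributions on n×n {0,1}-matrices M: under P₁, every entry M_{ij} equals 1 with probability d/n independently; under P₂, a uniformly random index σ ∈ [n] is chosen, and then independently each entry M_{ij} equals 1 with probability τ if σ ∈ {i,j} and with probability d/n otherwise. Then TV(P₁, P₂) ≤ n^{−1/3+η}. -/
open MeasureTheory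

/-- `P₁`: each entry equals `1` with probability `d/n`, independently. -/
noncomputable def lawP1 (n : ℕ) (d : ℝ) : Measure (Fin n → Fin n → ℝ) :=
  Measure.pi fun _ => Measure.pi fun _ => bernoulliR (d / n)

/-- The uniform probability measure on `Fin n`. -/
noncomputable def uniformFin (n : ℕ) : Measure (Fin n) :=
  (n : ENNReal)⁻¹ • Measure.count

/-- `P₂`: a uniformly random index `σ ∈ [n]` is chosen, and then independently the entry
`M i j` equals `1` with probability `τ` if `σ ∈ {i, j}` and with probability `d/n` otherwise. -/
noncomputable def lawP2 (n : ℕ) (d τ : ℝ) : Measure (Fin n → Fin n → ℝ) :=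
  (uniformFin n).bind fun σ =>
    Measure.pi fun i => Measure.pi fun j =>
      if σ = i ∨ σ = j then bernoulliR τ else bernoulliR (d / n)

/-!
Let `L σ` be the likelihood ratio against `P₁` of the law in which the cross of `σ` (row `σ` and
column `σ`) has been modified. The total variation distance is at most `𝔼₁ |1 - n⁻¹ ∑ σ, L σ|`.
The second moment of `L σ` is too large, because of the rare crosses with unusually many ones, so
`L σ` is replaced by `0` where the cross has more than `k` ones. An exponential Markov inequality
with parameter `a` shows that this removes mass `exp (-a k)`, and one with parameter `b` bounds the
remaining second moment by `exp (b k)`, up to factors `n ^ o(1)` as long as `n τ exp a` and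
`n (τ² / p) exp (-b)` are `o(log n)`, where `p = d / n`. Two crosses meet in two entries only, and
given that these vanish the truncated ratios are independent, so their covariance is
`n ^ (-1 + o(1))`. By Cauchy-Schwarz the distance is at most
`n ^ (-1/2 + o(1)) exp (b k / 2) + n ^ o(1) exp (-a k)`.

In terms of `x = log n`, the two side conditions hold for `a = (1/2 - ε) log x` and
`b = (1/3 + ε) log x`, and `k = (3/4) x / log x` makes both terms `n ^ (-3/8 + O(ε))`.
-/

namespace ModifiedRowColumn

open ProbabilityTheory Finset

section ProductMeasure

variable {ι : Type*} {α : ι → Type*}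

lemma dependsOn_comp_piecewise [DecidableEq ι] {β : Type*} {F : (∀ i, α i) → β} {R : Finset ι}
    (hF : DependsOn F R) (S : Finset ι) (c : ∀ i, α i) :
    DependsOn (fun x => F (S.piecewise c x)) (R \ S : Finset ι) := fun x y hxy =>
  hF fun i hi => by
    by_cases hiS : i ∈ S
    · simp [hiS]
    · simpa [hiS] using hxy i (by simpa [hiS] using hi)

variable [∀ i, MeasurableSpace (α i)]

lemma measurable_finset_piecewise [DecidableEq ι] (S : Finset ι) (c : ∀ i, α i) :
    Measurable fun x : ∀ i, α i => S.piecewise c x :=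
  measurable_pi_lambda _ fun i => by by_cases hi : i ∈ S <;> simp [hi, measurable_pi_apply]

lemma exists_measurable_comp_restrict {β : Type*} [MeasurableSpace β] [Nonempty (∀ i, α i)]
    {F : (∀ i, α i) → β} {R : Finset ι} (hF : Measurable F) (hFR : DependsOn F R) :
    ∃ f : (∀ i : R, α i) → β, Measurable f ∧ f ∘ (fun x i => x i) = F := by
  classical
  let x₀ : ∀ i, α i := Classical.arbitrary _
  let extend (y : ∀ i : R, α i) (i : ι) : α i := if h : i ∈ R then y ⟨i, h⟩ else x₀ i
  have h_extend : Measurable extend := by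
    refine measurable_pi_lambda _ fun i => ?_
    by_cases h : i ∈ R
    · simpa only [extend, h, dite_true] using measurable_pi_apply (⟨i, h⟩ : R)
    · simpa only [extend, h, dite_false] using measurable_const
  exact ⟨F ∘ extend, hF.comp h_extend,
    funext fun x => hFR fun i hi => by simp only [extend, dif_pos (mem_coe.mp hi)]⟩

variable [Fintype ι] (μ : ∀ i, Measure (α i)) [∀ i, IsProbabilityMeasure (μ i)]

lemma integral_finset_prod_pi (s : Finset ι) (f : ∀ i, α i → ℝ) :
    ∫ x, ∏ i ∈ s, f i (x i) ∂Measure.pi μ = ∏ i ∈ s, ∫ y, f i y ∂μ i := by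
  classical
  calc ∫ x, ∏ i ∈ s, f i (x i) ∂Measure.pi μ
      = ∫ x, ∏ i, (if i ∈ s then f i else 1) (x i) ∂Measure.pi μ := by
        simp only [ite_apply, Pi.one_apply, Fintype.prod_ite_mem]
    _ = ∏ i, ∫ y, (if i ∈ s then f i else 1) y ∂μ i := integral_fintype_prod_eq_prod _
    _ = ∏ i, if i ∈ s then ∫ y, f i y ∂μ i else 1 := by
        refine prod_congr rfl fun i _ => ?_
        split_ifs <;> simp
    _ = ∏ i ∈ s, ∫ y, f i y ∂μ i := Fintype.prod_ite_mem s _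

lemma pi_withDensity (f : ∀ i, α i → ENNReal) (hf : ∀ i, Measurable (f i))
    [∀ i, SigmaFinite ((μ i).withDensity (f i))] :
    Measure.pi (fun i => (μ i).withDensity (f i)) =
      (Measure.pi μ).withDensity fun x => ∏ i, f i (x i) := by
  refine Measure.pi_eq fun s hs => ?_
  have h_box : (Set.univ.pi s).indicator (fun x => ∏ i, f i (x i)) =
      fun x => ∏ i, (s i).indicator (f i) (x i) := by
    ext x
    by_cases hx : ∀ i, x i ∈ s i
    · simp [Set.indicator, hx]
    · obtain ⟨i, hi⟩ := not_forall.mp hx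
      rw [Set.indicator_of_notMem (by simpa using ⟨i, hi⟩),
        prod_eq_zero (mem_univ i) (Set.indicator_of_notMem hi _)]
  have h_meas (i : ι) : Measurable ((s i).indicator (f i)) := (hf i).indicator (hs i)
  rw [withDensity_apply _ (.univ_pi hs), ← lintegral_indicator (.univ_pi hs), h_box,
    lintegral_prod_eq_prod_lintegral_of_indepFun univ _
      (iIndepFun_pi fun i => (h_meas i).aemeasurable)
      fun i => (h_meas i).comp (measurable_pi_apply i)]
  refine prod_congr rfl fun i _ => ?_
  rw [withDensity_apply _ (hs i), ← lintegral_indicator (hs i)]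
  exact (measurePreserving_eval μ i).lintegral_comp (h_meas i)

lemma indepFun_of_dependsOn {β γ : Type*} [MeasurableSpace β] [MeasurableSpace γ]
    {F : (∀ i, α i) → β} {G : (∀ i, α i) → γ} {R T : Finset ι} (hRT : Disjoint R T)
    (hF : Measurable F) (hG : Measurable G) (hFR : DependsOn F R) (hGT : DependsOn G T) :
    IndepFun F G (Measure.pi μ) := by
  have : Nonempty (∀ i, α i) := ⟨fun i => (μ i).nonempty_of_neZero.some⟩
  obtain ⟨f, hf, rfl⟩ := exists_measurable_comp_restrict hF hFR
  obtain ⟨g, hg, rfl⟩ := exists_measurable_comp_restrict hG hGT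
  exact ((iIndepFun_pi fun i => aemeasurable_id).indepFun_finset R T hRT
    measurable_pi_apply).comp hf hg

variable [DecidableEq ι] [∀ i, MeasurableSingletonClass (α i)]

lemma setIntegral_eqOn (S : Finset ι) (c : ∀ i, α i) {F : (∀ i, α i) → ℝ} (hF : Measurable F) :
    ∫ x in {x | ∀ i ∈ S, x i = c i}, F x ∂Measure.pi μ =
      (Measure.pi μ).real {x | ∀ i ∈ S, x i = c i} *
        ∫ x, F (S.piecewise c x) ∂Measure.pi μ := by
  set C : Set (∀ i, α i) := {x | ∀ i ∈ S, x i = c i}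
  have hC : MeasurableSet C := by
    have hC_pi : C = (S : Set ι).pi fun i => {c i} := by ext; simp [C]
    exact hC_pi ▸ .pi S.countable_toSet fun i _ => .singleton _
  have hC_meas : Measurable (C.indicator fun _ => (1 : ℝ)) := measurable_const.indicator hC
  have hF_meas : Measurable fun x => F (S.piecewise c x) :=
    hF.comp (measurable_finset_piecewise S c)
  have hC_dep : DependsOn (C.indicator fun _ => (1 : ℝ)) S := fun x y hxy => by
    classical
    have : x ∈ C ↔ y ∈ C := forall₂_congr fun i hi => by rw [hxy i hi]
    simp only [Set.indicator_apply, this]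
  have hF_dep : DependsOn (fun x => F (S.piecewise c x)) (univ \ S : Finset ι) :=
    dependsOn_comp_piecewise (by simpa using dependsOn_univ F) S c
  have h_freeze (x : ∀ i, α i) :
      C.indicator F x = C.indicator (fun _ => 1) x * F (S.piecewise c x) := by
    by_cases hx : x ∈ C
    · have : S.piecewise c x = x := funext fun i => by
        by_cases hi : i ∈ S
        · simp [hi, hx i hi]
        · simp [hi]
      simp [hx, this]
    · simp [hx]
  simp_rw [← integral_indicator hC, h_freeze]
  rw [(indepFun_of_dependsOn μ disjoint_sdiff hC_meas hF_meas hC_dep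
    hF_dep).integral_fun_mul_eq_mul_integral hC_meas.aestronglyMeasurable
    hF_meas.aestronglyMeasurable, integral_indicator_const _ hC, smul_eq_mul, mul_one]

lemma measureReal_mul_setIntegral_eqOn_mul {R T S : Finset ι} (hS : R ∩ T ⊆ S) (c : ∀ i, α i)
    {F G : (∀ i, α i) → ℝ} (hF : Measurable F) (hG : Measurable G)
    (hFR : DependsOn F R) (hGT : DependsOn G T) :
    (Measure.pi μ).real {x | ∀ i ∈ S, x i = c i} *
        ∫ x in {x | ∀ i ∈ S, x i = c i}, F x * G x ∂Measure.pi μ =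
      (∫ x in {x | ∀ i ∈ S, x i = c i}, F x ∂Measure.pi μ) *
        ∫ x in {x | ∀ i ∈ S, x i = c i}, G x ∂Measure.pi μ := by
  have h_disjoint : Disjoint (R \ S) (T \ S) := by
    simp only [Finset.disjoint_left, mem_sdiff]
    exact fun i hR hT => hR.2 (hS (mem_inter.mpr ⟨hR.1, hT.1⟩))
  have hF' : Measurable fun x => F (S.piecewise c x) :=
    hF.comp (measurable_finset_piecewise S c)
  have hG' : Measurable fun x => G (S.piecewise c x) :=
    hG.comp (measurable_finset_piecewise S c)
  rw [setIntegral_eqOn μ S c hF, setIntegral_eqOn μ S c hG,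
    setIntegral_eqOn μ S c (F := fun x => F x * G x) (hF.mul hG),
    (indepFun_of_dependsOn μ h_disjoint hF' hG' (dependsOn_comp_piecewise hFR S c)
      (dependsOn_comp_piecewise hGT S c)).integral_fun_mul_eq_mul_integral
      hF'.aestronglyMeasurable hG'.aestronglyMeasurable]
  ring

end ProductMeasure

section SecondMoment

variable {Ω : Type*} [MeasurableSpace Ω] {μ : Measure Ω} [IsProbabilityMeasure μ]

lemma integral_abs_sub_integral_le_sqrt_variance {X : Ω → ℝ} (hX : MemLp X 2 μ) :
    ∫ ω, |X ω - ∫ ω', X ω' ∂μ| ∂μ ≤ √(Var[X; μ]) := by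
  have hY : MemLp (fun ω => |X ω - ∫ ω', X ω' ∂μ|) 2 μ := (hX.sub (memLp_const _)).abs
  have h_var := variance_nonneg (fun ω => |X ω - ∫ ω', X ω' ∂μ|) μ
  rw [variance_eq_sub hY] at h_var
  simp only [Pi.pow_apply, sq_abs] at h_var
  rw [variance_eq_integral hX.aemeasurable]
  exact Real.le_sqrt_of_sq_le (by linarith)

lemma integral_abs_one_sub_add_le {X T : Ω → ℝ} (hX : MemLp X 2 μ) (hT : Integrable T μ)
    (hT_nonneg : 0 ≤ T) (h_one : ∫ ω, X ω ∂μ + ∫ ω, T ω ∂μ = 1) :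
    ∫ ω, |1 - (X ω + T ω)| ∂μ ≤ √(Var[X; μ]) + 2 * ∫ ω, T ω ∂μ := by
  set m := ∫ ω, X ω ∂μ
  have hX_int : Integrable X μ := hX.integrable one_le_two
  have h_dev : Integrable (fun ω => |X ω - m|) μ := (hX_int.sub (integrable_const m)).abs
  have h_tail : Integrable (fun ω => T ω + (1 - m)) μ := hT.add (integrable_const _)
  have hT_int_nonneg : 0 ≤ ∫ ω, T ω ∂μ := integral_nonneg hT_nonneg
  have h_pointwise (ω : Ω) : |1 - (X ω + T ω)| ≤ |X ω - m| + (T ω + (1 - m)) := by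
    have : 0 ≤ T ω := hT_nonneg ω
    rw [abs_le]
    constructor <;> linarith [neg_abs_le (X ω - m), le_abs_self (X ω - m)]
  calc ∫ ω, |1 - (X ω + T ω)| ∂μ
      ≤ ∫ ω, (|X ω - m| + (T ω + (1 - m))) ∂μ :=
        integral_mono ((integrable_const 1).sub (hX_int.add hT)).abs
          (h_dev.add h_tail) h_pointwise
    _ = ∫ ω, |X ω - m| ∂μ + 2 * ∫ ω, T ω ∂μ := by
        rw [integral_add h_dev h_tail, integral_add hT (integrable_const _), integral_const,
          probReal_univ, one_smul]
        linarith
    _ ≤ √(Var[X; μ]) + 2 * ∫ ω, T ω ∂μ := by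
        gcongr
        exact integral_abs_sub_integral_le_sqrt_variance hX

variable {κ : Type*} [Fintype κ]

lemma variance_average_le [Nonempty κ] {X : κ → Ω → ℝ} (hX : ∀ σ, MemLp (X σ) 2 μ)
    {V c : ℝ} (hc : 0 ≤ c) (h_var : ∀ σ, Var[X σ; μ] ≤ V)
    (h_cov : ∀ σ σ', σ ≠ σ' → cov[X σ, X σ'; μ] ≤ c) :
    Var[fun ω => (Fintype.card κ : ℝ)⁻¹ * ∑ σ, X σ ω; μ] ≤ V / Fintype.card κ + c := by
  classical
  have h_row (σ : κ) : ∑ σ', cov[X σ, X σ'; μ] ≤ V + Fintype.card κ * c :=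
    calc ∑ σ', cov[X σ, X σ'; μ]
        = Var[X σ; μ] + ∑ σ' ∈ univ.erase σ, cov[X σ, X σ'; μ] := by
          rw [← add_sum_erase _ _ (mem_univ σ), covariance_self (hX σ).aemeasurable]
      _ ≤ V + ∑ _σ' : κ, c := by
          refine add_le_add (h_var σ) ((sum_le_sum fun _ hσ' =>
            h_cov σ _ (ne_of_mem_erase hσ').symm).trans ?_)
          exact sum_le_sum_of_subset_of_nonneg (erase_subset _ _) fun _ _ _ => hc
      _ = V + Fintype.card κ * c := by simp
  calc Var[fun ω => (Fintype.card κ : ℝ)⁻¹ * ∑ σ, X σ ω; μ]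
      = (Fintype.card κ : ℝ)⁻¹ ^ 2 * ∑ σ, ∑ σ', cov[X σ, X σ'; μ] := by
        rw [variance_const_mul, variance_fun_sum hX]
    _ ≤ (Fintype.card κ : ℝ)⁻¹ ^ 2 * ∑ _σ : κ, (V + Fintype.card κ * c) := by
        gcongr with σ
        exact h_row σ
    _ = V / Fintype.card κ + c := by
        rw [sum_const, card_univ, nsmul_eq_mul]
        field_simp

lemma abs_measureReal_sub_average_withDensity_le {L : κ → Ω → ℝ} (hL : ∀ σ, Integrable (L σ) μ)
    (hL_nonneg : ∀ σ, 0 ≤ L σ) {A : Set Ω} (hA : MeasurableSet A) :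
    |μ.real A - (Fintype.card κ : ℝ)⁻¹ *
        ∑ σ, (μ.withDensity fun ω => ENNReal.ofReal (L σ ω)).real A| ≤
      ∫ ω, |1 - (Fintype.card κ : ℝ)⁻¹ * ∑ σ, L σ ω| ∂μ := by
  have h_density (σ : κ) :
      (μ.withDensity fun ω => ENNReal.ofReal (L σ ω)).real A = ∫ ω in A, L σ ω ∂μ := by
    rw [measureReal_def, withDensity_apply _ hA,
      integral_eq_lintegral_of_nonneg_ae (.of_forall (hL_nonneg σ)) (hL σ).1.restrict]
  have h_avg : Integrable (fun ω => (Fintype.card κ : ℝ)⁻¹ * ∑ σ, L σ ω) μ :=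
    (integrable_finsetSum _ fun σ _ => hL σ).const_mul _
  have h_diff : Integrable (fun ω => 1 - (Fintype.card κ : ℝ)⁻¹ * ∑ σ, L σ ω) μ :=
    (integrable_const 1).sub h_avg
  calc _ = |∫ ω in A, (1 - (Fintype.card κ : ℝ)⁻¹ * ∑ σ, L σ ω) ∂μ| := by
        rw [integral_sub (integrable_const 1) h_avg.integrableOn, setIntegral_const,
          integral_const_mul, integral_finsetSum _ fun σ _ => (hL σ).integrableOn]
        simp only [h_density, smul_eq_mul, mul_one]
    _ ≤ ∫ ω in A, |1 - (Fintype.card κ : ℝ)⁻¹ * ∑ σ, L σ ω| ∂μ := abs_integral_le_integral_abs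
    _ ≤ ∫ ω, |1 - (Fintype.card κ : ℝ)⁻¹ * ∑ σ, L σ ω| ∂μ :=
        setIntegral_le_integral h_diff.abs (.of_forall fun _ => abs_nonneg _)

end SecondMoment

section Likelihood

/-- The law of independent bits indexed by `ι`, each equal to `true` with probability `p`. -/
noncomputable abbrev bernoulliPi (ι : Type*) [Fintype ι] (p : unitInterval) : Measure (ι → Bool) :=
  Measure.pi fun _ => Ber(true, false, p)

/-- The likelihood ratio of a Bernoulli bit of parameter `τ` against one of parameter `p`. -/
noncomputable def bernoulliLikelihood (p τ : unitInterval) (b : Bool) : ℝ :=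
  if b then τ / p else (1 - τ) / (1 - p)

/-- The likelihood ratio, against `bernoulliPi ι p`, of the law in which the bits in `R` have
parameter `τ` instead of `p`. -/
noncomputable def likelihood {ι : Type*} (p τ : unitInterval) (R : Finset ι) (ω : ι → Bool) : ℝ :=
  ∏ e ∈ R, bernoulliLikelihood p τ (ω e)

/-- The number of bits in `R` that are `true`. -/
def onesCount {ι : Type*} (R : Finset ι) (ω : ι → Bool) : ℕ := #{e ∈ R | ω e}

/-- The likelihood ratio of `R`, replaced by `0` where `R` has more than `k` ones. -/
noncomputable def truncatedLikelihood {ι : Type*} (p τ : unitInterval) (R : Finset ι) (k : ℝ)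
    (ω : ι → Bool) : ℝ :=
  if onesCount R ω ≤ k then likelihood p τ R ω else 0

variable {ι : Type*} {p τ : unitInterval}

lemma bernoulliLikelihood_nonneg (b : Bool) : 0 ≤ bernoulliLikelihood p τ b := by
  have := unitInterval.one_minus_nonneg τ
  have := unitInterval.one_minus_nonneg p
  unfold bernoulliLikelihood
  split_ifs
  exacts [div_nonneg τ.2.1 p.2.1, div_nonneg ‹_› ‹_›]

lemma likelihood_nonneg (R : Finset ι) (ω : ι → Bool) : 0 ≤ likelihood p τ R ω :=
  prod_nonneg fun _ _ => bernoulliLikelihood_nonneg _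

lemma likelihood_mul_likelihood [DecidableEq ι] (R T : Finset ι) (ω : ι → Bool) :
    likelihood p τ R ω * likelihood p τ T ω =
      likelihood p τ (R ∪ T) ω * likelihood p τ (R ∩ T) ω :=
  (prod_union_inter ..).symm

lemma truncatedLikelihood_nonneg (R : Finset ι) (k : ℝ) (ω : ι → Bool) :
    0 ≤ truncatedLikelihood p τ R k ω := by
  unfold truncatedLikelihood
  split_ifs
  exacts [likelihood_nonneg R ω, le_rfl]

lemma truncatedLikelihood_le_likelihood (R : Finset ι) (k : ℝ) (ω : ι → Bool) :
    truncatedLikelihood p τ R k ω ≤ likelihood p τ R ω := by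
  unfold truncatedLikelihood
  split_ifs
  exacts [le_rfl, likelihood_nonneg R ω]

lemma dependsOn_truncatedLikelihood (R : Finset ι) (k : ℝ) :
    DependsOn (truncatedLikelihood p τ R k) R := fun ω ω' h => by
  have h_ones : onesCount R ω = onesCount R ω' := by
    unfold onesCount
    congr 1
    exact filter_congr fun e he => by rw [h e he]
  have h_likelihood : likelihood p τ R ω = likelihood p τ R ω' :=
    prod_congr rfl fun e he => by rw [h e he]
  simp only [truncatedLikelihood, h_ones, h_likelihood]

lemma exp_mul_onesCount (t : ℝ) (R : Finset ι) (ω : ι → Bool) :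
    Real.exp (t * onesCount R ω) = ∏ e ∈ R, if ω e then Real.exp t else 1 := by
  rw [prod_ite, prod_const, prod_const_one, mul_one, ← Real.exp_nat_mul, onesCount, mul_comm]

lemma likelihood_sub_truncatedLikelihood_le {a : ℝ} (ha : 0 ≤ a) (R : Finset ι) (k : ℝ)
    (ω : ι → Bool) :
    likelihood p τ R ω - truncatedLikelihood p τ R k ω ≤
      Real.exp (-(a * k)) * (likelihood p τ R ω * Real.exp (a * onesCount R ω)) := by
  have hL := likelihood_nonneg (p := p) (τ := τ) R ω
  unfold truncatedLikelihood
  split_ifs with h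
  · rw [sub_self]
    positivity
  · rw [sub_zero, mul_left_comm, ← Real.exp_add]
    refine le_mul_of_one_le_right hL (Real.one_le_exp ?_)
    nlinarith

lemma truncatedLikelihood_sq_le {b : ℝ} (hb : 0 ≤ b) (R : Finset ι) (k : ℝ) (ω : ι → Bool) :
    truncatedLikelihood p τ R k ω ^ 2 ≤
      Real.exp (b * k) * (likelihood p τ R ω * likelihood p τ R ω *
        Real.exp (-b * onesCount R ω)) := by
  unfold truncatedLikelihood
  split_ifs with h
  · rw [mul_left_comm, ← Real.exp_add, ← sq]
    refine le_mul_of_one_le_right (sq_nonneg _) (Real.one_le_exp ?_)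
    nlinarith
  · have := mul_self_nonneg (likelihood p τ R ω)
    rw [zero_pow two_ne_zero]
    positivity

lemma indicator_eqOn_false (S : Finset ι) (F : (ι → Bool) → ℝ) (ω : ι → Bool) :
    {ω | ∀ e ∈ S, ω e = false}.indicator F ω = F ω * ∏ e ∈ S, if ω e then 0 else 1 := by
  classical
  by_cases h : ∀ e ∈ S, ω e = false
  · rw [Set.indicator_of_mem (by exact h), prod_eq_one fun e he => by simp [h e he], mul_one]
  · obtain ⟨e, he, hω⟩ : ∃ e ∈ S, ω e = true := by simpa using h
    rw [Set.indicator_of_notMem (by exact h), prod_eq_zero he (by simp [hω]), mul_zero]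

lemma integral_bernoulliLikelihood_mul (hp₀ : p ≠ 0) (hp₁ : p ≠ 1) (h : Bool → ℝ) :
    ∫ b, bernoulliLikelihood p τ b * h b ∂Ber(true, false, p) =
      τ * h true + (1 - τ) * h false := by
  have hp₀' : (p : ℝ) ≠ 0 := by simpa using hp₀
  have hp₁' : (1 : ℝ) - p ≠ 0 := sub_ne_zero.mpr (unitInterval.coe_ne_one.mpr hp₁).symm
  simp only [bernoulliLikelihood, ite_mul, integral_bernoulliMeasure, if_true, smul_eq_mul,
    Bool.false_eq_true, if_false]
  field_simp

lemma integral_bernoulliLikelihood_mul_self_mul (hp₀ : p ≠ 0) (hp₁ : p ≠ 1) (h : Bool → ℝ) :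
    ∫ b, bernoulliLikelihood p τ b * bernoulliLikelihood p τ b * h b ∂Ber(true, false, p) =
      (τ : ℝ) ^ 2 / p * h true + (1 - τ : ℝ) ^ 2 / (1 - p) * h false := by
  have hp₀' : (p : ℝ) ≠ 0 := by simpa using hp₀
  have hp₁' : (1 : ℝ) - p ≠ 0 := sub_ne_zero.mpr (unitInterval.coe_ne_one.mpr hp₁).symm
  simp only [bernoulliLikelihood, mul_ite, ite_mul, integral_bernoulliMeasure, if_true, smul_eq_mul,
    Bool.false_eq_true, if_false]
  field_simp

lemma withDensity_bernoulliLikelihood (hp₀ : p ≠ 0) (hp₁ : p ≠ 1) :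
    Ber(true, false, p).withDensity (fun b => ENNReal.ofReal (bernoulliLikelihood p τ b)) =
      Ber(true, false, τ) := by
  refine Measure.ext_of_singleton fun b => ?_
  have h_indicator : Set.indicator {b} (bernoulliLikelihood p τ) =
      fun c => bernoulliLikelihood p τ c * Set.indicator {b} 1 c := by
    ext c
    simp [Set.indicator_apply]
  rw [withDensity_apply _ (.singleton b),
    ← ofReal_integral_eq_lintegral_ofReal (integrable_bernoulliMeasure ..).restrict
      (.of_forall bernoulliLikelihood_nonneg),
    ← integral_indicator (.singleton b), h_indicator, integral_bernoulliLikelihood_mul hp₀ hp₁,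
    ← ofReal_measureReal, bernoulliMeasure_real_apply _ .of_discrete]
  cases b <;> simp

variable [Fintype ι]

lemma measureReal_eqOn_false (S : Finset ι) :
    (bernoulliPi ι p).real {ω | ∀ e ∈ S, ω e = false} = (1 - p : ℝ) ^ #S := by
  have h := integral_finset_prod_pi (fun _ => Ber(true, false, p)) S
    fun _ b => if b then (0 : ℝ) else 1
  rw [← integral_indicator_one .of_discrete]
  simp_rw [indicator_eqOn_false S 1, Pi.one_apply, one_mul, h, integral_bernoulliMeasure]
  simp

lemma integral_likelihood_mul_prod (hp₀ : p ≠ 0) (hp₁ : p ≠ 1) (R : Finset ι)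
    (h : Bool → ℝ) :
    ∫ ω, likelihood p τ R ω * ∏ e ∈ R, h (ω e) ∂bernoulliPi ι p =
      (τ * h true + (1 - τ) * h false) ^ #R := by
  simp_rw [likelihood, ← prod_mul_distrib]
  rw [integral_finset_prod_pi _ R fun _ b => bernoulliLikelihood p τ b * h b, prod_const,
    integral_bernoulliLikelihood_mul hp₀ hp₁]

lemma integral_likelihood (hp₀ : p ≠ 0) (hp₁ : p ≠ 1) (R : Finset ι) :
    ∫ ω, likelihood p τ R ω ∂bernoulliPi ι p = 1 := by
  simpa using integral_likelihood_mul_prod (τ := τ) hp₀ hp₁ R 1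

lemma integral_likelihood_mul_likelihood_mul_prod [DecidableEq ι]
    (hp₀ : p ≠ 0) (hp₁ : p ≠ 1) (R T : Finset ι) (h : Bool → ℝ) :
    ∫ ω, likelihood p τ R ω * likelihood p τ T ω * ∏ e ∈ R ∩ T, h (ω e) ∂bernoulliPi ι p =
      ((τ : ℝ) ^ 2 / p * h true + (1 - τ : ℝ) ^ 2 / (1 - p) * h false) ^ #(R ∩ T) := by
  have h_inter (ω : ι → Bool) : likelihood p τ R ω * likelihood p τ T ω * ∏ e ∈ R ∩ T, h (ω e) =
      ∏ e ∈ R ∪ T, bernoulliLikelihood p τ (ω e) *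
        if e ∈ R ∩ T then bernoulliLikelihood p τ (ω e) * h (ω e) else 1 := by
    rw [likelihood_mul_likelihood, prod_mul_distrib, prod_ite_mem,
      inter_eq_right.mpr (inter_subset_left.trans subset_union_left), prod_mul_distrib, mul_assoc]
    rfl
  simp_rw [h_inter]
  rw [integral_finset_prod_pi _ (R ∪ T) fun e b => bernoulliLikelihood p τ b *
    if e ∈ R ∩ T then bernoulliLikelihood p τ b * h b else 1]
  have h_factor (e : ι) : ∫ b, (bernoulliLikelihood p τ b *
      if e ∈ R ∩ T then bernoulliLikelihood p τ b * h b else 1) ∂Ber(true, false, p) =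
      if e ∈ R ∩ T then (τ : ℝ) ^ 2 / p * h true + (1 - τ : ℝ) ^ 2 / (1 - p) * h false else 1 := by
    split_ifs
    · simpa only [mul_assoc] using integral_bernoulliLikelihood_mul_self_mul hp₀ hp₁ h
    · simpa using integral_bernoulliLikelihood_mul (τ := τ) hp₀ hp₁ 1
  simp_rw [h_factor]
  rw [prod_ite_mem, inter_eq_right.mpr (inter_subset_left.trans subset_union_left), prod_const]

lemma integral_likelihood_sub_truncatedLikelihood_le (hp₀ : p ≠ 0) (hp₁ : p ≠ 1) {a : ℝ}
    (ha : 0 ≤ a) (R : Finset ι) (k : ℝ) :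
    ∫ ω, (likelihood p τ R ω - truncatedLikelihood p τ R k ω) ∂bernoulliPi ι p ≤
      Real.exp (-(a * k) + #R * (τ * Real.exp a)) := by
  have h_base : 0 ≤ τ * Real.exp a + (1 - τ) := by
    have := unitInterval.one_minus_nonneg τ
    have := τ.2.1
    positivity
  calc ∫ ω, (likelihood p τ R ω - truncatedLikelihood p τ R k ω) ∂bernoulliPi ι p
      ≤ ∫ ω, Real.exp (-(a * k)) * (likelihood p τ R ω * Real.exp (a * onesCount R ω))
          ∂bernoulliPi ι p :=
        integral_mono .of_finite .of_finite (likelihood_sub_truncatedLikelihood_le ha R k)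
    _ = Real.exp (-(a * k)) * (τ * Real.exp a + (1 - τ)) ^ #R := by
        simp_rw [integral_const_mul, exp_mul_onesCount]
        rw [integral_likelihood_mul_prod hp₀ hp₁ R fun b => if b then Real.exp a else 1]
        simp
    _ ≤ Real.exp (-(a * k)) * Real.exp (τ * Real.exp a) ^ #R := by
        gcongr
        linarith [Real.add_one_le_exp (τ * Real.exp a), τ.2.1]
    _ = Real.exp (-(a * k) + #R * (τ * Real.exp a)) := by
        rw [← Real.exp_nat_mul, ← Real.exp_add]

lemma integral_truncatedLikelihood_sq_le (hp₀ : p ≠ 0) (hp₁ : p ≠ 1) {b : ℝ}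
    (hb : 0 ≤ b) (hp : (p : ℝ) ≤ 1 / 2) (R : Finset ι) (k : ℝ) :
    ∫ ω, truncatedLikelihood p τ R k ω ^ 2 ∂bernoulliPi ι p ≤
      Real.exp (b * k + #R * (2 * p + (τ : ℝ) ^ 2 / p * Real.exp (-b))) := by
  have h_u : (1 - τ : ℝ) ^ 2 / (1 - p) ≤ 1 + 2 * p := by
    rw [div_le_iff₀ (by linarith)]
    nlinarith [τ.2.1, τ.2.2, p.2.1]
  have h_u_nonneg : 0 ≤ (1 - τ : ℝ) ^ 2 / (1 - p) := div_nonneg (sq_nonneg _) (by linarith)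
  have h_s_nonneg : 0 ≤ (τ : ℝ) ^ 2 / p * Real.exp (-b) :=
    mul_nonneg (div_nonneg (sq_nonneg _) p.2.1) (Real.exp_nonneg _)
  classical
  calc ∫ ω, truncatedLikelihood p τ R k ω ^ 2 ∂bernoulliPi ι p
      ≤ ∫ ω, Real.exp (b * k) * (likelihood p τ R ω * likelihood p τ R ω *
          Real.exp (-b * onesCount R ω)) ∂bernoulliPi ι p :=
        integral_mono .of_finite .of_finite (truncatedLikelihood_sq_le hb R k)
    _ = Real.exp (b * k) *
          ((τ : ℝ) ^ 2 / p * Real.exp (-b) + (1 - τ : ℝ) ^ 2 / (1 - p)) ^ #R := by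
        simp_rw [integral_const_mul, exp_mul_onesCount]
        simpa using integral_likelihood_mul_likelihood_mul_prod (τ := τ) hp₀ hp₁ R R
          fun b' => if b' then Real.exp (-b) else 1
    _ ≤ Real.exp (b * k) * Real.exp (2 * p + (τ : ℝ) ^ 2 / p * Real.exp (-b)) ^ #R := by
        gcongr
        linarith [Real.add_one_le_exp (2 * p + (τ : ℝ) ^ 2 / p * Real.exp (-b))]
    _ = Real.exp (b * k + #R * (2 * p + (τ : ℝ) ^ 2 / p * Real.exp (-b))) := by
        rw [← Real.exp_nat_mul, ← Real.exp_add]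

lemma integral_truncatedLikelihood_le_one (hp₀ : p ≠ 0) (hp₁ : p ≠ 1) (R : Finset ι)
    (k : ℝ) :
    ∫ ω, truncatedLikelihood p τ R k ω ∂bernoulliPi ι p ≤ 1 :=
  (integral_mono .of_finite .of_finite (truncatedLikelihood_le_likelihood R k)).trans_eq
    (integral_likelihood hp₀ hp₁ R)

lemma setIntegral_compl_eqOn_false_likelihood_mul_likelihood [DecidableEq ι]
    (hp₀ : p ≠ 0) (hp₁ : p ≠ 1) (R T : Finset ι) :
    ∫ ω in {ω | ∀ e ∈ R ∩ T, ω e = false}ᶜ, likelihood p τ R ω * likelihood p τ T ω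
        ∂bernoulliPi ι p =
      ((τ : ℝ) ^ 2 / p + (1 - τ : ℝ) ^ 2 / (1 - p)) ^ #(R ∩ T) -
        ((1 - τ : ℝ) ^ 2 / (1 - p)) ^ #(R ∩ T) := by
  have h_full := integral_likelihood_mul_likelihood_mul_prod (τ := τ) hp₀ hp₁ R T 1
  have h_false := integral_likelihood_mul_likelihood_mul_prod (τ := τ) hp₀ hp₁ R T
    fun b => if b then 0 else 1
  rw [setIntegral_compl .of_discrete .of_finite, ← integral_indicator .of_discrete]
  simp_rw [indicator_eqOn_false, h_false]
  simpa using h_full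

lemma covariance_truncatedLikelihood_le [DecidableEq ι]
    (hp₀ : p ≠ 0) (hp₁ : p ≠ 1) (R T : Finset ι) (k : ℝ) :
    cov[truncatedLikelihood p τ R k, truncatedLikelihood p τ T k; bernoulliPi ι p] ≤
      (((1 - p : ℝ) ^ #(R ∩ T))⁻¹ - 1) +
      (((τ : ℝ) ^ 2 / p + (1 - τ : ℝ) ^ 2 / (1 - p)) ^ #(R ∩ T) -
        ((1 - τ : ℝ) ^ 2 / (1 - p)) ^ #(R ∩ T)) := by
  set F := truncatedLikelihood p τ R k
  set G := truncatedLikelihood p τ T k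
  set C : Set (ι → Bool) := {ω | ∀ e ∈ R ∩ T, ω e = false}
  set P := (∫ ω, F ω ∂bernoulliPi ι p) * ∫ ω, G ω ∂bernoulliPi ι p
  have hF (ω : ι → Bool) : 0 ≤ F ω := truncatedLikelihood_nonneg R k ω
  have hG (ω : ι → Bool) : 0 ≤ G ω := truncatedLikelihood_nonneg T k ω
  have hP : P ≤ 1 := mul_le_one₀ (integral_truncatedLikelihood_le_one hp₀ hp₁ R k)
    (integral_nonneg hG) (integral_truncatedLikelihood_le_one hp₀ hp₁ T k)
  have hp : 0 < 1 - (p : ℝ) := sub_pos.mpr (lt_of_le_of_ne p.2.2 (by simpa using hp₁))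
  have hq : 0 < (1 - p : ℝ) ^ #(R ∩ T) := pow_pos hp _
  have hq_le : (1 - p : ℝ) ^ #(R ∩ T) ≤ 1 := pow_le_one₀ hp.le (by linarith [p.2.1])
  -- Once the common entries of `R` and `T` are frozen, `F` and `G` are independent.
  have h_C : ∫ ω in C, F ω * G ω ∂bernoulliPi ι p ≤ P * ((1 - p : ℝ) ^ #(R ∩ T))⁻¹ := by
    rw [← div_eq_mul_inv, le_div_iff₀' hq, ← measureReal_eqOn_false (p := p),
      measureReal_mul_setIntegral_eqOn_mul _ subset_rfl (fun _ => false) .of_discrete .of_discrete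
      (dependsOn_truncatedLikelihood R k) (dependsOn_truncatedLikelihood T k)]
    exact mul_le_mul (setIntegral_le_integral .of_finite (.of_forall hF))
      (setIntegral_le_integral .of_finite (.of_forall hG)) (integral_nonneg hG)
      (integral_nonneg hF)
  have h_compl : ∫ ω in Cᶜ, F ω * G ω ∂bernoulliPi ι p ≤
      ∫ ω in Cᶜ, likelihood p τ R ω * likelihood p τ T ω ∂bernoulliPi ι p :=
    integral_mono .of_finite .of_finite fun ω =>
      mul_le_mul (truncatedLikelihood_le_likelihood R k ω) (truncatedLikelihood_le_likelihood T k ω)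
        (hG ω) (likelihood_nonneg R ω)
  have h_P : P * (((1 - p : ℝ) ^ #(R ∩ T))⁻¹ - 1) ≤ ((1 - p : ℝ) ^ #(R ∩ T))⁻¹ - 1 :=
    mul_le_of_le_one_left (sub_nonneg.mpr ((one_le_inv₀ hq).mpr hq_le)) hP
  rw [setIntegral_compl_eqOn_false_likelihood_mul_likelihood hp₀ hp₁] at h_compl
  rw [covariance_eq_sub .of_discrete .of_discrete, Pi.mul_def,
    ← integral_add_compl (s := C) .of_discrete .of_finite]
  linarith

lemma covariance_truncatedLikelihood_le_of_card_inter_le_two [DecidableEq ι]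
    (hp₀ : p ≠ 0) (hp₁ : p ≠ 1) {R T : Finset ι} (hRT : #(R ∩ T) ≤ 2)
    (hp : (p : ℝ) ≤ 1 / 4) (hτ : (τ : ℝ) ^ 2 / p ≤ 1 / 2) (k : ℝ) :
    cov[truncatedLikelihood p τ R k, truncatedLikelihood p τ T k; bernoulliPi ι p] ≤
      4 * p + 4 * ((τ : ℝ) ^ 2 / p) := by
  refine (covariance_truncatedLikelihood_le hp₀ hp₁ R T k).trans ?_
  set s := (τ : ℝ) ^ 2 / p
  set u := (1 - τ : ℝ) ^ 2 / (1 - p)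
  have hp_nonneg := p.2.1
  have hs : 0 ≤ s := div_nonneg (sq_nonneg _) hp_nonneg
  have hu : 0 ≤ u := div_nonneg (sq_nonneg _) (by linarith)
  have hu_le : u ≤ 3 / 2 := by
    rw [div_le_iff₀ (by linarith)]
    nlinarith [τ.2.1, τ.2.2]
  have h_pow : (s + u) ^ #(R ∩ T) - u ^ #(R ∩ T) ≤ 4 * s := by
    interval_cases #(R ∩ T) <;> nlinarith [hu]
  have h_inv : ((1 - p : ℝ) ^ #(R ∩ T))⁻¹ - 1 ≤ 4 * p := by
    rw [sub_le_iff_le_add, inv_le_iff_one_le_mul₀ (pow_pos (by linarith) _)]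
    interval_cases #(R ∩ T) <;> nlinarith [mul_nonneg hp_nonneg hp_nonneg]
  linarith

lemma pi_ite_eq_withDensity_likelihood [DecidableEq ι]
    (hp₀ : p ≠ 0) (hp₁ : p ≠ 1) (R : Finset ι) :
    (Measure.pi fun e => if e ∈ R then Ber(true, false, τ) else Ber(true, false, p)) =
      (bernoulliPi ι p).withDensity fun ω => ENNReal.ofReal (likelihood p τ R ω) := by
  let f (e : ι) (b : Bool) : ENNReal :=
    if e ∈ R then ENNReal.ofReal (bernoulliLikelihood p τ b) else 1
  have h_factor (e : ι) : Ber(true, false, p).withDensity (f e) =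
      if e ∈ R then Ber(true, false, τ) else Ber(true, false, p) := by
    by_cases he : e ∈ R
    · simp only [f, he, if_true, withDensity_bernoulliLikelihood hp₀ hp₁]
    · simp only [f, he, if_false]
      exact withDensity_one
  have h_prod (ω : ι → Bool) : ∏ e, f e (ω e) = ENNReal.ofReal (likelihood p τ R ω) := by
    rw [likelihood, ENNReal.ofReal_prod_of_nonneg fun _ _ => bernoulliLikelihood_nonneg _]
    exact Fintype.prod_ite_mem R _
  have (e : ι) : SigmaFinite (Ber(true, false, p).withDensity (f e)) := by
    rw [h_factor]
    split_ifs <;> infer_instance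
  simp_rw [← h_factor, ← h_prod]
  exact pi_withDensity _ f fun _ => .of_discrete

end Likelihood

section Mixture

variable {ι : Type*} [Fintype ι] {p τ : unitInterval} {κ : Type*} [Fintype κ] [Nonempty κ]
  {R : κ → Finset ι} {m : ℕ} {a b : ℝ}

lemma integral_average_likelihood_sub_truncatedLikelihood_le (hp₀ : p ≠ 0) (hp₁ : p ≠ 1)
    (hR : ∀ σ, #(R σ) ≤ m) (ha : 0 ≤ a) (k : ℝ) :
    ∫ ω, (Fintype.card κ : ℝ)⁻¹ *
        ∑ σ, (likelihood p τ (R σ) ω - truncatedLikelihood p τ (R σ) k ω) ∂bernoulliPi ι p ≤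
      Real.exp (-(a * k) + m * (τ * Real.exp a)) := by
  have hτ_nonneg := τ.2.1
  rw [integral_const_mul, integral_finsetSum _ fun _ _ => .of_finite,
    inv_mul_le_iff₀ (Nat.cast_pos.mpr Fintype.card_pos), ← nsmul_eq_mul]
  refine sum_le_card_nsmul _ _ _ fun σ _ =>
    (integral_likelihood_sub_truncatedLikelihood_le hp₀ hp₁ ha (R σ) k).trans ?_
  gcongr
  exact hR σ

variable [DecidableEq ι]

lemma variance_average_truncatedLikelihood_le (hp₀ : p ≠ 0) (hp : (p : ℝ) ≤ 1 / 4)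
    (hτ : (τ : ℝ) ^ 2 / p ≤ 1 / 2) (hR : ∀ σ, #(R σ) ≤ m)
    (hR_inter : ∀ σ σ', σ ≠ σ' → #(R σ ∩ R σ') ≤ 2) (hb : 0 ≤ b) (k : ℝ) :
    Var[fun ω => (Fintype.card κ : ℝ)⁻¹ * ∑ σ, truncatedLikelihood p τ (R σ) k ω;
        bernoulliPi ι p] ≤
      Real.exp (b * k + m * (2 * p + (τ : ℝ) ^ 2 / p * Real.exp (-b))) / Fintype.card κ +
        (4 * p + 4 * ((τ : ℝ) ^ 2 / p)) := by
  have hp₁ : p ≠ 1 := by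
    rintro rfl
    norm_num at hp
  have hp_nonneg := p.2.1
  refine variance_average_le (fun _ => .of_discrete) (by positivity) (fun σ => ?_) fun σ σ' h =>
    covariance_truncatedLikelihood_le_of_card_inter_le_two hp₀ hp₁ (hR_inter σ σ' h) hp hτ k
  refine (variance_le_expectation_sq .of_discrete).trans
    ((integral_truncatedLikelihood_sq_le hp₀ hp₁ hb (by linarith) (R σ) k).trans ?_)
  gcongr
  exact hR σ

lemma integral_abs_one_sub_average_likelihood_le (hp₀ : p ≠ 0) (hp : (p : ℝ) ≤ 1 / 4)
    (hτ : (τ : ℝ) ^ 2 / p ≤ 1 / 2) (hR : ∀ σ, #(R σ) ≤ m)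
    (hR_inter : ∀ σ σ', σ ≠ σ' → #(R σ ∩ R σ') ≤ 2) (ha : 0 ≤ a) (hb : 0 ≤ b) (k : ℝ) :
    ∫ ω, |1 - (Fintype.card κ : ℝ)⁻¹ * ∑ σ, likelihood p τ (R σ) ω| ∂bernoulliPi ι p ≤
      √(Real.exp (b * k + m * (2 * p + (τ : ℝ) ^ 2 / p * Real.exp (-b))) / Fintype.card κ +
          (4 * p + 4 * ((τ : ℝ) ^ 2 / p))) +
        2 * Real.exp (-(a * k) + m * (τ * Real.exp a)) := by
  have hp₁ : p ≠ 1 := by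
    rintro rfl
    norm_num at hp
  let X (ω : ι → Bool) : ℝ := (Fintype.card κ : ℝ)⁻¹ * ∑ σ, truncatedLikelihood p τ (R σ) k ω
  let T (ω : ι → Bool) : ℝ := (Fintype.card κ : ℝ)⁻¹ *
    ∑ σ, (likelihood p τ (R σ) ω - truncatedLikelihood p τ (R σ) k ω)
  have hT (ω : ι → Bool) : 0 ≤ T ω := mul_nonneg (by positivity) (sum_nonneg fun σ _ =>
    sub_nonneg.mpr (truncatedLikelihood_le_likelihood (R σ) k ω))
  have h_split (ω : ι → Bool) :
      (Fintype.card κ : ℝ)⁻¹ * ∑ σ, likelihood p τ (R σ) ω = X ω + T ω := by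
    simp only [X, T, sum_sub_distrib]
    ring
  have h_mass : ∫ ω, X ω ∂bernoulliPi ι p + ∫ ω, T ω ∂bernoulliPi ι p = 1 := by
    rw [← integral_add .of_finite .of_finite]
    simp_rw [← h_split]
    rw [integral_const_mul, integral_finsetSum _ fun _ _ => .of_finite]
    simp [integral_likelihood hp₀ hp₁]
  simp_rw [h_split]
  refine (integral_abs_one_sub_add_le .of_discrete .of_finite hT h_mass).trans ?_
  gcongr
  · exact variance_average_truncatedLikelihood_le hp₀ hp hτ hR hR_inter hb k
  · exact integral_average_likelihood_sub_truncatedLikelihood_le hp₀ hp₁ hR ha k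

end Mixture

section Matrix

/-- The `{0,1}`-matrix whose entries are given by bits. -/
def bitMatrix {m n : Type*} (ω : m × n → Bool) (i : m) (j : n) : ℝ := if ω (i, j) then 1 else 0

/-- The row and the column of index `σ` in an `n × n` matrix. -/
def cross (n : ℕ) (σ : Fin n) : Finset (Fin n × Fin n) := {e | σ = e.1 ∨ σ = e.2}

lemma card_cross_le (n : ℕ) (σ : Fin n) : #(cross n σ) ≤ 2 * n := by
  have h_subset : cross n σ ⊆ {σ} ×ˢ univ ∪ univ ×ˢ {σ} := by
    rintro ⟨i, j⟩ h
    simpa [cross, eq_comm] using h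
  calc #(cross n σ) ≤ #({σ} ×ˢ (univ : Finset (Fin n))) + #((univ : Finset (Fin n)) ×ˢ {σ}) :=
        (card_le_card h_subset).trans (card_union_le _ _)
    _ = 2 * n := by simp [two_mul]

lemma card_cross_inter_cross_le_two {n : ℕ} {σ σ' : Fin n} (h : σ ≠ σ') :
    #(cross n σ ∩ cross n σ') ≤ 2 := by
  refine (card_le_card (t := {(σ, σ'), (σ', σ)}) ?_).trans card_le_two
  rintro ⟨i, j⟩ hij
  simp only [cross, mem_inter, mem_filter_univ] at hij
  simp only [mem_insert, mem_singleton, Prod.mk.injEq]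
  grind

lemma measurableEmbedding_bitMatrix {m n : Type*} [Finite m] [Finite n] :
    MeasurableEmbedding (bitMatrix : (m × n → Bool) → m → n → ℝ) where
  injective ω ω' h := funext fun ⟨i, j⟩ => by
    have h_entry := congrFun₂ h i j
    cases hω : ω (i, j) <;> cases hω' : ω' (i, j) <;> simp_all [bitMatrix]
  measurable := .of_discrete
  measurableSet_image' _ _ := (Set.toFinite _).measurableSet

lemma map_bernoulliMeasure_eq_bernoulliR (p : unitInterval) :
    Ber(true, false, p).map (fun b => if b then (1 : ℝ) else 0) = bernoulliR p := by
  refine (map_bernoulliMeasure' true false .of_discrete p).trans ?_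
  have h_ofReal (q : unitInterval) : ENNReal.ofReal q = unitInterval.toNNReal q :=
    ENNReal.ofReal_eq_coe_nnreal q.2.1
  rw [bernoulliR, ← unitInterval.coe_symm_eq, h_ofReal, h_ofReal]
  simp only [bernoulliMeasure_def, if_true, Bool.false_eq_true, if_false]
  rfl

lemma map_bitMatrix_pi {m n : Type*} [Fintype m] [Fintype n] (p : m × n → unitInterval) :
    (Measure.pi fun e => Ber(true, false, p e)).map bitMatrix =
      Measure.pi fun i => Measure.pi fun j => bernoulliR (p (i, j)) := by
  have h_curry : (Measure.pi fun e => Ber(true, false, p e)).map (MeasurableEquiv.curry m n Bool) =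
      Measure.pi fun i => Measure.pi fun j => Ber(true, false, p (i, j)) := by
    simpa only [Measure.infinitePi_eq_pi] using
      Measure.infinitePi_map_curry fun i j => Ber(true, false, p (i, j))
  have h_entries : bitMatrix = (fun (x : m → n → Bool) i j => if x i j then (1 : ℝ) else 0) ∘
      MeasurableEquiv.curry m n Bool := rfl
  rw [h_entries, ← Measure.map_map .of_discrete .of_discrete, h_curry]
  have h_prob (i : m) (j : n) : IsProbabilityMeasure (bernoulliR (p (i, j))) := by
    rw [← map_bernoulliMeasure_eq_bernoulliR]
    exact Measure.isProbabilityMeasure_map .of_discrete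
  have h_row (i : m) : (Measure.pi fun j => Ber(true, false, p (i, j))).map
      (fun y j => if y j then (1 : ℝ) else 0) = Measure.pi fun j => bernoulliR (p (i, j)) := by
    simp_rw [← map_bernoulliMeasure_eq_bernoulliR] at h_prob ⊢
    exact Measure.pi_map_pi (f := fun _ (b : Bool) => if b then (1 : ℝ) else 0)
      fun _ => .of_discrete
  have (i : m) : SigmaFinite ((Measure.pi fun j => Ber(true, false, p (i, j))).map
      (fun y j => if y j then (1 : ℝ) else 0)) := h_row i ▸ inferInstance
  simp_rw [← h_row]
  exact Measure.pi_map_pi (f := fun _ (y : n → Bool) j => if y j then (1 : ℝ) else 0)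
    fun _ => .of_discrete

lemma lawP2_eq_sum (n : ℕ) (d τ : ℝ) : lawP2 n d τ = (n : ENNReal)⁻¹ • ∑ σ : Fin n,
    Measure.pi fun i => Measure.pi fun j =>
      if σ = i ∨ σ = j then bernoulliR τ else bernoulliR (d / n) := by
  ext s hs
  rw [lawP2, Measure.bind_apply hs (measurable_of_finite _).aemeasurable, uniformFin,
    lintegral_smul_measure, lintegral_count, tsum_fintype, Measure.smul_apply,
    Measure.finsetSum_apply]

lemma lawP1_apply {n : ℕ} {d : ℝ} {p : unitInterval} (hp : (p : ℝ) = d / n)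
    (E : Set (Fin n → Fin n → ℝ)) : lawP1 n d E = bernoulliPi _ p (bitMatrix ⁻¹' E) := by
  rw [← measurableEmbedding_bitMatrix.map_apply, map_bitMatrix_pi fun _ => p, hp, lawP1]

lemma lawP2_apply {n : ℕ} {d : ℝ} {p τ : unitInterval} (hp₀ : p ≠ 0) (hp₁ : p ≠ 1)
    (hp : (p : ℝ) = d / n) (E : Set (Fin n → Fin n → ℝ)) :
    lawP2 n d τ E = (n : ENNReal)⁻¹ * ∑ σ, (bernoulliPi _ p).withDensity
      (fun ω => ENNReal.ofReal (likelihood p τ (cross n σ) ω)) (bitMatrix ⁻¹' E) := by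
  have h_term (σ : Fin n) : ((bernoulliPi _ p).withDensity
      fun ω => ENNReal.ofReal (likelihood p τ (cross n σ) ω)).map bitMatrix =
      Measure.pi fun i => Measure.pi fun j =>
        if σ = i ∨ σ = j then bernoulliR τ else bernoulliR (d / n) := by
    rw [← pi_ite_eq_withDensity_likelihood hp₀ hp₁]
    have := map_bitMatrix_pi fun e => if e ∈ cross n σ then τ else p
    simpa [apply_ite, cross, hp] using this
  simp_rw [lawP2_eq_sum, Measure.smul_apply, Measure.finsetSum_apply, smul_eq_mul, ← h_term,
    measurableEmbedding_bitMatrix.map_apply]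

lemma abs_lawP1_sub_lawP2_le {n : ℕ} [NeZero n] {d : ℝ} {p τ : unitInterval}
    (hpd : (p : ℝ) = d / n) (hp₀ : p ≠ 0) (hp : (p : ℝ) ≤ 1 / 4) (hτ : (τ : ℝ) ^ 2 / p ≤ 1 / 2)
    {a b : ℝ} (ha : 0 ≤ a) (hb : 0 ≤ b) (k : ℝ) (E : Set (Fin n → Fin n → ℝ)) :
    |(lawP1 n d E).toReal - (lawP2 n d τ E).toReal| ≤
      √(Real.exp (b * k + 2 * n * (2 * p + (τ : ℝ) ^ 2 / p * Real.exp (-b))) / n +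
          (4 * p + 4 * ((τ : ℝ) ^ 2 / p))) +
        2 * Real.exp (-(a * k) + 2 * n * (τ * Real.exp a)) := by
  have hp₁ : p ≠ 1 := by
    rintro rfl
    norm_num at hp
  have h_density := abs_measureReal_sub_average_withDensity_le (μ := bernoulliPi (Fin n × Fin n) p)
    (L := fun σ => likelihood p τ (cross n σ)) (fun _ => .of_finite)
    (fun σ => likelihood_nonneg _) (.of_discrete : MeasurableSet (bitMatrix ⁻¹' E))
  have h_average := integral_abs_one_sub_average_likelihood_le hp₀ hp hτ (card_cross_le n)
    (fun _ _ => card_cross_inter_cross_le_two) ha hb k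
  have (σ : Fin n) : IsFiniteMeasure ((bernoulliPi (Fin n × Fin n) p).withDensity
      fun ω => ENNReal.ofReal (likelihood p τ (cross n σ) ω)) := by
    rw [← pi_ite_eq_withDensity_likelihood hp₀ hp₁]
    have (e : Fin n × Fin n) : IsProbabilityMeasure
        (if e ∈ cross n σ then Ber(true, false, τ) else Ber(true, false, p)) := by
      split_ifs <;> infer_instance
    infer_instance
  rw [lawP1_apply hpd, lawP2_apply hp₀ hp₁ hpd, ENNReal.toReal_mul, ENNReal.toReal_inv,
    ENNReal.toReal_natCast, ENNReal.toReal_sum fun _ _ => measure_ne_top _ _]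
  simpa [Measure.real] using h_density.trans h_average

end Matrix

section Asymptotics

open Filter

lemma isLittleO_rpow_id {s : ℝ} (hs : s < 1) : (fun x : ℝ => x ^ s) =o[atTop] fun x => x := by
  refine (Asymptotics.isLittleO_iff_tendsto' ?_).mpr
    ((tendsto_rpow_neg_atTop (sub_pos.mpr hs)).congr' ?_)
  · filter_upwards [eventually_ne_atTop 0] with x hx h
    exact absurd h hx
  · filter_upwards [eventually_gt_atTop 0] with x hx
    rw [neg_sub, Real.rpow_sub_one hx.ne']

lemma eventually_rpow_add_rpow_le_mul {ε : ℝ} (hε : 0 < ε) :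
    ∀ᶠ x : ℝ in atTop, 4 * x ^ (1 / 3 : ℝ) + 8 * x ^ (1 - ε) ≤ ε / 8 * x := by
  have h := ((isLittleO_rpow_id (show 1 / 3 < 1 by norm_num)).const_mul_left 4).add
    ((isLittleO_rpow_id (sub_lt_self 1 hε)).const_mul_left 8)
  filter_upwards [h.bound (show 0 < ε / 8 by positivity), eventually_ge_atTop 0] with x hx hx₀
  rwa [Real.norm_of_nonneg (by positivity), Real.norm_of_nonneg hx₀] at hx

lemma eventually_rpow_add_rpow_le_exp :
    ∀ᶠ x : ℝ in atTop, 4 * x ^ (1 / 3 : ℝ) + 16 * x ^ (4 / 3 : ℝ) ≤ Real.exp (1 / 4 * x) := by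
  have h_exp (s : ℝ) := isLittleO_rpow_exp_pos_mul_atTop s (show (0 : ℝ) < 1 / 4 by norm_num)
  have h := ((h_exp (1 / 3)).const_mul_left 4).add ((h_exp (4 / 3)).const_mul_left 16)
  filter_upwards [h.bound one_pos, eventually_ge_atTop 0] with x hx hx₀
  rwa [Real.norm_of_nonneg (by positivity), Real.norm_of_nonneg (Real.exp_nonneg _), one_mul] at hx

lemma exp_mul_log {x : ℝ} (hx : 0 < x) (s : ℝ) : Real.exp (s * Real.log x) = x ^ s := by
  rw [Real.rpow_def_of_pos hx, mul_comm]

lemma sq_div_div_le {x N d τ : ℝ} (hx : 0 < x) (hN : 0 < N) (hd : x ^ (-(1 / 3 : ℝ)) ≤ d)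
    (hτ : τ ∈ Set.Icc 0 (2 * √x / N)) : τ ^ 2 / (d / N) ≤ 4 * x ^ (4 / 3 : ℝ) / N := by
  have : 0 < x ^ (-(1 / 3 : ℝ)) := Real.rpow_pos_of_pos hx _
  calc τ ^ 2 / (d / N) ≤ (2 * √x / N) ^ 2 / (x ^ (-(1 / 3 : ℝ)) / N) := by
        have := hτ.1
        gcongr
        exact hτ.2
    _ = 4 * (x / x ^ (-(1 / 3 : ℝ))) / N := by
        rw [div_pow, mul_pow, Real.sq_sqrt hx.le]
        field_simp
        norm_num
    _ = 4 * x ^ (4 / 3 : ℝ) / N := by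
        rw [← Real.rpow_one_sub' hx.le (by norm_num)]
        norm_num

lemma tail_exponent_le {ε x N τ : ℝ} (hx : 1 < x) (hN : 0 < N) (hτ : τ ≤ 2 * √x / N)
    (h_growth : 4 * x ^ (1 / 3 : ℝ) + 8 * x ^ (1 - ε) ≤ ε / 8 * x) :
    -((1 / 2 - ε) * Real.log x * (3 / 4 * x / Real.log x)) +
        2 * N * (τ * Real.exp ((1 / 2 - ε) * Real.log x)) ≤ -(3 / 8 - 7 / 8 * ε) * x := by
  have hx₀ : 0 < x := one_pos.trans hx
  have h_log : Real.log x ≠ 0 := (Real.log_pos hx).ne'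
  have h_main : (1 / 2 - ε) * Real.log x * (3 / 4 * x / Real.log x) = (3 / 8 - 3 / 4 * ε) * x := by
    field_simp
    ring
  have h_error : 2 * N * (τ * Real.exp ((1 / 2 - ε) * Real.log x)) ≤ 4 * x ^ (1 - ε) :=
    calc 2 * N * (τ * Real.exp ((1 / 2 - ε) * Real.log x))
        ≤ 2 * N * (2 * √x / N * x ^ (1 / 2 - ε)) := by
          rw [exp_mul_log hx₀]
          gcongr
      _ = 4 * (x ^ (1 / 2 : ℝ) * x ^ (1 / 2 - ε)) := by
          rw [Real.sqrt_eq_rpow]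
          field_simp
          norm_num
      _ = 4 * x ^ (1 - ε) := by
          rw [← Real.rpow_add hx₀]
          ring_nf
  have : 0 ≤ x ^ (1 / 3 : ℝ) := by positivity
  have : 0 ≤ x ^ (1 - ε) := by positivity
  linarith

lemma second_moment_exponent_le {ε x N p s : ℝ} (hx : 1 < x) (hN : 0 < N)
    (hp : p ≤ x ^ (1 / 3 : ℝ) / N) (hs : s ≤ 4 * x ^ (4 / 3 : ℝ) / N)
    (h_growth : 4 * x ^ (1 / 3 : ℝ) + 8 * x ^ (1 - ε) ≤ ε / 8 * x) :
    (1 / 3 + ε) * Real.log x * (3 / 4 * x / Real.log x) +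
        2 * N * (2 * p + s * Real.exp (-((1 / 3 + ε) * Real.log x))) ≤
      (1 / 4 + 7 / 8 * ε) * x := by
  have hx₀ : 0 < x := one_pos.trans hx
  have h_log : Real.log x ≠ 0 := (Real.log_pos hx).ne'
  have h_main : (1 / 3 + ε) * Real.log x * (3 / 4 * x / Real.log x) = (1 / 4 + 3 / 4 * ε) * x := by
    field_simp
  have h_error : 2 * N * (2 * p + s * Real.exp (-((1 / 3 + ε) * Real.log x))) ≤
      4 * x ^ (1 / 3 : ℝ) + 8 * x ^ (1 - ε) :=
    calc 2 * N * (2 * p + s * Real.exp (-((1 / 3 + ε) * Real.log x)))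
        ≤ 2 * N * (2 * (x ^ (1 / 3 : ℝ) / N) + 4 * x ^ (4 / 3 : ℝ) / N * x ^ (-(1 / 3 + ε))) := by
          rw [← neg_mul, exp_mul_log hx₀]
          gcongr
      _ = 4 * x ^ (1 / 3 : ℝ) + 8 * (x ^ (4 / 3 : ℝ) * x ^ (-(1 / 3 + ε))) := by
          field_simp
          ring
      _ = 4 * x ^ (1 / 3 : ℝ) + 8 * x ^ (1 - ε) := by
          rw [← Real.rpow_add hx₀]
          ring_nf
  linarith

lemma sqrt_exp_div_add_add_two_mul_exp_le {ε x s t q : ℝ} (hε : 0 ≤ ε) (hx : 0 ≤ x)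
    (hs : s ≤ (1 / 4 + 7 / 8 * ε) * x) (ht : t ≤ -(3 / 8 - 7 / 8 * ε) * x)
    (hq : q ≤ Real.exp (-(3 / 4) * x)) (h_four : 4 ≤ Real.exp (ε / 8 * x)) :
    √(Real.exp s / Real.exp x + q) + 2 * Real.exp t ≤ Real.exp ((-(3 / 8) + ε) * x) := by
  set y := -(3 / 8 - 7 / 8 * ε) * x with hy
  have hεx : 0 ≤ ε * x := mul_nonneg hε hx
  have h_sqrt : √(Real.exp s / Real.exp x + q) ≤ 2 * Real.exp y := by
    refine Real.sqrt_le_iff.mpr ⟨by positivity, ?_⟩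
    calc Real.exp s / Real.exp x + q ≤ Real.exp (2 * y) + Real.exp (2 * y) := by
          rw [← Real.exp_sub]
          refine add_le_add (Real.exp_le_exp.mpr ?_) (hq.trans (Real.exp_le_exp.mpr ?_)) <;>
            linarith
      _ ≤ (2 * Real.exp y) ^ 2 := by
          rw [mul_pow, ← Real.exp_nat_mul, Nat.cast_ofNat]
          linarith [Real.exp_nonneg (2 * y)]
  calc √(Real.exp s / Real.exp x + q) + 2 * Real.exp t
      ≤ 2 * Real.exp y + 2 * Real.exp y := by gcongr
    _ ≤ Real.exp (ε / 8 * x) * Real.exp y := by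
        rw [← add_mul]
        gcongr
        linarith
    _ = Real.exp ((-(3 / 8) + ε) * x) := by
        rw [← Real.exp_add, hy]
        ring_nf

lemma mul_div_add_mul_sq_div_le_exp {x d τ : ℝ} (hx : 0 < x)
    (hd : d ∈ Set.Icc (x ^ (-(1 / 3 : ℝ))) (x ^ (1 / 3 : ℝ)))
    (hτ : τ ∈ Set.Icc 0 (2 * √x / Real.exp x))
    (h_growth : 4 * x ^ (1 / 3 : ℝ) + 16 * x ^ (4 / 3 : ℝ) ≤ Real.exp (1 / 4 * x)) :
    4 * (d / Real.exp x) + 4 * (τ ^ 2 / (d / Real.exp x)) ≤ Real.exp (-(3 / 4) * x) := by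
  have hs_le := sq_div_div_le hx (Real.exp_pos x) hd.1 hτ
  calc 4 * (d / Real.exp x) + 4 * (τ ^ 2 / (d / Real.exp x))
      ≤ 4 * (x ^ (1 / 3 : ℝ) / Real.exp x) + 4 * (4 * x ^ (4 / 3 : ℝ) / Real.exp x) := by
        gcongr
        exact hd.2
    _ = (4 * x ^ (1 / 3 : ℝ) + 16 * x ^ (4 / 3 : ℝ)) / Real.exp x := by ring
    _ ≤ Real.exp (1 / 4 * x) / Real.exp x := by gcongr
    _ = Real.exp (-(3 / 4) * x) := by
        rw [← Real.exp_sub]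
        ring_nf

lemma abs_lawP1_sub_lawP2_le_rpow {ε : ℝ} (hε : 0 < ε) (hε_le : ε ≤ 1 / 2) {n : ℕ} [NeZero n]
    (h_log : 1 < Real.log n)
    (h_growth : 4 * Real.log n ^ (1 / 3 : ℝ) + 8 * Real.log n ^ (1 - ε) ≤ ε / 8 * Real.log n)
    (h_exp : 4 * Real.log n ^ (1 / 3 : ℝ) + 16 * Real.log n ^ (4 / 3 : ℝ) ≤
      Real.exp (1 / 4 * Real.log n))
    (h_four : 4 ≤ Real.exp (ε / 8 * Real.log n)) {d τ : ℝ}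
    (hd : d ∈ Set.Icc (Real.log n ^ (-(1 / 3 : ℝ))) (Real.log n ^ (1 / 3 : ℝ)))
    (hτ : τ ∈ Set.Icc 0 (2 * √(Real.log n) / n)) (E : Set (Fin n → Fin n → ℝ)) :
    |(lawP1 n d E).toReal - (lawP2 n d τ E).toReal| ≤ (n : ℝ) ^ (-(3 / 8) + ε) := by
  set x := Real.log n
  have hx : 0 < x := one_pos.trans h_log
  have hn : (0 : ℝ) < n := Nat.cast_pos.mpr (NeZero.pos n)
  have h_exp_log : Real.exp x = n := Real.exp_log hn
  have hp_pos : 0 < d / n := div_pos ((Real.rpow_pos_of_pos hx _).trans_le hd.1) hn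
  have hs_nonneg : 0 ≤ τ ^ 2 / (d / n) := by positivity
  have h_small : 4 * (d / n) + 4 * (τ ^ 2 / (d / n)) ≤ Real.exp (-(3 / 4) * x) := by
    rw [← h_exp_log] at hτ ⊢
    exact mul_div_add_mul_sq_div_le_exp hx hd hτ h_exp
  have h_small_one : Real.exp (-(3 / 4) * x) ≤ 1 := Real.exp_le_one_iff.mpr (by linarith)
  have hτ_sq : τ ^ 2 ≤ 1 * (d / n) := (div_le_iff₀ hp_pos).mp (by linarith)
  let p : unitInterval := ⟨d / n, hp_pos.le, by linarith⟩
  let t : unitInterval := ⟨τ, hτ.1, (sq_le_one_iff₀ hτ.1).mp (by linarith)⟩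
  refine (abs_lawP1_sub_lawP2_le (p := p) (τ := t) (a := (1 / 2 - ε) * Real.log x)
    (b := (1 / 3 + ε) * Real.log x) rfl (unitInterval.coe_ne_zero.mp hp_pos.ne')
    (show d / n ≤ 1 / 4 by linarith) (show τ ^ 2 / (d / n) ≤ 1 / 2 by linarith)
    (mul_nonneg (by linarith) (Real.log_pos h_log).le)
    (mul_nonneg (by linarith) (Real.log_pos h_log).le) (3 / 4 * x / Real.log x) E).trans ?_
  have hp_le : d / n ≤ x ^ (1 / 3 : ℝ) / n := by
    gcongr
    exact hd.2
  rw [Real.rpow_def_of_pos hn, mul_comm (Real.log n)]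
  simpa only [h_exp_log] using sqrt_exp_div_add_add_two_mul_exp_le hε.le hx.le
    (second_moment_exponent_le h_log hn hp_le (sq_div_div_le hx hn hd.1 hτ) h_growth)
    (tail_exponent_le h_log hn hτ.2 h_growth) h_small h_four

end Asymptotics
end ModifiedRowColumn

theorem tv_modified_row_column_general (c : ℝ) (hc : c < 3 / 8) :
    ∃ N : ℕ, ∀ n : ℕ, N ≤ n → ∀ d τ : ℝ,
      d ∈ Set.Icc ((Real.log n) ^ (-(1 / 3 : ℝ))) ((Real.log n) ^ ((1 : ℝ) / 3)) →
      τ ∈ Set.Icc 0 (2 * Real.sqrt (Real.log n) / n) →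
      ∀ E : Set (Fin n → Fin n → ℝ),
        |(lawP1 n d E).toReal - (lawP2 n d τ E).toReal| ≤ (n : ℝ) ^ (-c) := by
  set ε := min (3 / 8 - c) (1 / 2)
  have hε : 0 < ε := lt_min (sub_pos.mpr hc) (by norm_num)
  have h_log : Filter.Tendsto (fun n : ℕ => Real.log n) .atTop .atTop :=
    Real.tendsto_log_atTop.comp tendsto_natCast_atTop_atTop
  have h_four : ∀ᶠ x : ℝ in .atTop, 4 ≤ Real.exp (ε / 8 * x) :=
    (Real.tendsto_exp_atTop.comp
      (Filter.tendsto_id.const_mul_atTop (by positivity))).eventually_ge_atTop 4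
  refine Filter.eventually_atTop.mp ?_
  filter_upwards [Filter.eventually_gt_atTop 0, h_log.eventually (Filter.eventually_gt_atTop 1),
    h_log.eventually (ModifiedRowColumn.eventually_rpow_add_rpow_le_mul hε),
    h_log.eventually ModifiedRowColumn.eventually_rpow_add_rpow_le_exp,
    h_log.eventually h_four] with n hn hx h_growth h_exp h_four d τ hd hτ E
  have : NeZero n := ⟨hn.ne'⟩
  refine (ModifiedRowColumn.abs_lawP1_sub_lawP2_le_rpow hε (min_le_right _ _) hx h_growth h_exp
    h_four hd hτ E).trans (Real.rpow_le_rpow_of_exponent_le (Nat.one_le_cast.mpr hn) ?_)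
  linarith [min_le_left (3 / 8 - c) (1 / 2)]

theorem tv_modified_row_column (η : ℝ) (hη : 0 < η) :
    ∃ N : ℕ, ∀ n : ℕ, N ≤ n → ∀ d τ : ℝ,
      d ∈ Set.Icc ((Real.log n) ^ (-(1 / 3 : ℝ))) ((Real.log n) ^ ((1 : ℝ) / 3)) →
      τ ∈ Set.Icc (Real.sqrt (Real.log n) / (2 * n)) (2 * Real.sqrt (Real.log n) / n) →
      ∀ E : Set (Fin n → Fin n → ℝ),
        |(lawP1 n d E).toReal - (lawP2 n d τ E).toReal| ≤ (n : ℝ) ^ (-(1 / 3 : ℝ) + η) := by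
  obtain ⟨N, h⟩ := tv_modified_row_column_general (1 / 3 - η) (by linarith)
  refine ⟨N, fun n hn d τ hd hτ E => ?_⟩
  rw [show -(1 / 3) + η = -(1 / 3 - η) by ring]
  exact h n hn d τ hd ⟨le_trans (by positivity) hτ.1, hτ.2⟩ E
end

section
/- Fix δ > 0. There exist constants c > 0 and C > 0 depending only on δ such that the following holds. Let n be a positive integer, let m and ℓ be integers with ℓ ∈ {m, m+1} and m/n ∈ [1/2, 2], and let p satisfy pm ∈ [1+δ, δ^{−1}]. Let M be an m×ℓ random matrix with independent Ber(p) entries. Then for every integer k with 0 ≤ k ≤ cn, the expected number of subsets S ⊆ [ℓ] of size k whose set of unique neighbors satisfies |U(S)| < α(k)·k is at most C·e^{−ck}, where α(x) = (log(n/x))^{−2}. -/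
open MeasureTheory

/-- The law of an `m × l` matrix with iid `Ber(p)` entries. -/
noncomputable def iidRectLaw (m l : ℕ) (p : ℝ) : Measure (Fin m → Fin l → ℝ) :=
  Measure.pi fun _ => Measure.pi fun _ => bernoulliR p

/-- `α(x) = (log (n/x))⁻²`. -/
noncomputable def alphaFn (n : ℕ) (x : ℝ) : ℝ :=
  ((Real.log ((n : ℝ) / x)) ^ 2)⁻¹

/-- The set of unique neighbours `U(S)` of a set `S` of columns of an `m × l` matrix:
rows outside `S` having exactly one `1` in a column of `S`, together with rows in `S`
having no `1` in any column of `S` (rows and columns are identified via their index). -/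
def uniqueNbrSet {m l : ℕ} (M : Matrix (Fin m) (Fin l) ℝ) (S : Finset (Fin l)) :
    Set (Fin m) :=
  {i | ((∃ j ∈ S, (j : ℕ) = (i : ℕ)) ∧ ∀ j ∈ S, M i j = 0) ∨
       ((¬ ∃ j ∈ S, (j : ℕ) = (i : ℕ)) ∧ {j : Fin l | j ∈ S ∧ M i j = 1}.ncard = 1)}

/-! Fix a set `S` of `k` columns and write `d = p * m`, `y = k * p`. The rows of `M` are independent
and row `i` is a unique neighbour of `S` with probability `(1 - p) ^ k` if `i ∈ S` and
`k * p * (1 - p) ^ (k - 1)` otherwise, so `𝔼[t ^ |U(S)|]` is a product over the rows. The rows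
outside `S` contribute about `exp (-d * k)` and each row in `S` at most `t + y`, where `t = ε * y`.
Summing over `S` through the generating function `∏ j, (1 + x * w j)` at `x = 1 / d` bounds the
total by about `(exp (1 + ε - d) * d) ^ k`. Markov's inequality then costs a factor
`t ^ (-α(k) * k)`, and `α(k) * log t → 0` as `k / n → 0`. Hence the exponent is at most
`k * (1 + log d - d + o(1) + ε)`, and `1 + log d - d` is negative uniformly over `d ≥ 1 + δ`. -/

section RandomSubsets

theorem sum_powersetCard_prod_le {ι : Type*} (s : Finset ι) {w : ι → ℝ} (hw : ∀ i, 0 ≤ w i)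
    {x : ℝ} (hx : 0 < x) (k : ℕ) :
    ∑ T ∈ s.powersetCard k, ∏ i ∈ T, w i ≤ Real.exp (x * ∑ i ∈ s, w i) / x ^ k := by
  have hxw (i : ι) : 0 ≤ x * w i := mul_nonneg hx.le (hw i)
  rw [le_div_iff₀' (by positivity)]
  calc x ^ k * ∑ T ∈ s.powersetCard k, ∏ i ∈ T, w i
      = ∑ T ∈ s.powersetCard k, ∏ i ∈ T, x * w i := by
        rw [Finset.mul_sum]
        refine Finset.sum_congr rfl fun T hT => ?_
        rw [Finset.prod_mul_distrib, Finset.prod_const, (Finset.mem_powersetCard.1 hT).2]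
    _ ≤ ∑ T ∈ s.powerset, ∏ i ∈ T, x * w i :=
        Finset.sum_le_sum_of_subset_of_nonneg
          (fun T hT => Finset.mem_powerset.2 (Finset.mem_powersetCard.1 hT).1)
          fun T _ _ => Finset.prod_nonneg fun i _ => hxw i
    _ = ∏ i ∈ s, (1 + x * w i) := (Finset.prod_one_add s).symm
    _ ≤ Real.exp (∑ i ∈ s, x * w i) := Real.prod_one_add_le_exp_sum s hxw
    _ = Real.exp (x * ∑ i ∈ s, w i) := by rw [Finset.mul_sum]

theorem integral_ncard_lt_le {Ω ι : Type*} [MeasurableSpace Ω] {μ : Measure Ω} (s : Finset ι)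
    (f : ι → Ω → ℕ) {t : ℝ} (ht0 : 0 < t) (ht1 : t ≤ 1)
    (hf : ∀ i ∈ s, Integrable (fun ω => t ^ f i ω) μ) (X : ℝ) :
    ∫ ω, ({i | i ∈ s ∧ (f i ω : ℝ) < X}.ncard : ℝ) ∂μ ≤
      (∑ i ∈ s, ∫ ω, t ^ f i ω ∂μ) * Real.exp (-(X * Real.log t)) := by
  classical
  have ncard_le (ω : Ω) : ({i | i ∈ s ∧ (f i ω : ℝ) < X}.ncard : ℝ) ≤
      ∑ i ∈ s, t ^ f i ω * Real.exp (-(X * Real.log t)) := by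
    rw [← Finset.coe_filter, Set.ncard_coe_finset, Finset.card_filter, Nat.cast_sum]
    refine Finset.sum_le_sum fun i _ => ?_
    split_ifs with hi
    · rw [← Real.exp_log ht0, ← Real.exp_nat_mul, Real.log_exp, ← Real.exp_add, Nat.cast_one]
      exact Real.one_le_exp (by nlinarith [Real.log_nonpos ht0.le ht1])
    · rw [Nat.cast_zero]
      positivity
  have hf' : ∀ i ∈ s, Integrable (fun ω => t ^ f i ω * Real.exp (-(X * Real.log t))) μ :=
    fun i hi => (hf i hi).mul_const _
  calc ∫ ω, ({i | i ∈ s ∧ (f i ω : ℝ) < X}.ncard : ℝ) ∂μ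
      ≤ ∫ ω, ∑ i ∈ s, t ^ f i ω * Real.exp (-(X * Real.log t)) ∂μ :=
        integral_mono_of_nonneg (.of_forall fun _ => Nat.cast_nonneg _)
          (integrable_finsetSum s hf') (.of_forall ncard_le)
    _ = (∑ i ∈ s, ∫ ω, t ^ f i ω ∂μ) * Real.exp (-(X * Real.log t)) := by
        rw [integral_finsetSum s hf', Finset.sum_mul]
        simp_rw [integral_mul_const]

end RandomSubsets

section OnlyHit

variable {ι Ω : Type*}

/-- The event, on families `ω : ι → Ω`, that `j` is the only index in `S` with `ω j ∈ A`, written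
as a box so that product measures evaluate it (for `j ∉ S` it says that `A` is not hit on `S`). -/
def onlyHit [DecidableEq ι] (A : Set Ω) (S : Finset ι) (j : ι) : Set (ι → Ω) :=
  (S : Set ι).pi (Function.update (fun _ => Aᶜ) j A)

theorem setOf_ncard_eq_one_eq_iUnion_onlyHit [DecidableEq ι] (A : Set Ω) (S : Finset ι) :
    {ω : ι → Ω | {j | j ∈ S ∧ ω j ∈ A}.ncard = 1} = ⋃ j ∈ S, onlyHit A S j := by
  ext ω
  simp only [onlyHit, Set.mem_ofPred_eq, Set.ncard_eq_one, Set.mem_iUnion, Set.mem_pi, exists_prop]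
  refine exists_congr fun j => ⟨fun h => ?_, fun ⟨hj, h⟩ => Set.ext fun i => ?_⟩
  · have h' (i : ι) : i ∈ S ∧ ω i ∈ A ↔ i = j := Set.ext_iff.1 h i
    refine ⟨((h' j).2 rfl).1, fun i hi => ?_⟩
    obtain rfl | hij := eq_or_ne i j
    · simpa using ((h' i).2 rfl).2
    · simpa [hij] using fun hA => hij ((h' i).1 ⟨hi, hA⟩)
  · obtain rfl | hij := eq_or_ne i j
    · simpa [hj] using h i hj
    · simpa [hij] using h i

theorem pairwiseDisjoint_onlyHit [DecidableEq ι] (A : Set Ω) (S : Finset ι) :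
    (S : Set ι).PairwiseDisjoint (onlyHit A S) := by
  refine fun i hi j _ hij => Set.disjoint_left.2 fun ω hωi hωj => ?_
  have mem_A : ω i ∈ A := by simpa using hωi i hi
  have notMem_A : ω i ∉ A := by simpa [hij] using hωj i hi
  exact notMem_A mem_A

variable [MeasurableSpace Ω] {A : Set Ω}

theorem measurableSet_onlyHit [DecidableEq ι] (hA : MeasurableSet A) (S : Finset ι) (j : ι) :
    MeasurableSet (onlyHit A S j) := by
  refine .pi S.countable_toSet fun i _ => ?_
  obtain rfl | hij := eq_or_ne i j
  · simpa using hA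
  · simpa [hij] using hA

theorem measurableSet_setOf_ncard_eq_one (hA : MeasurableSet A) (S : Finset ι) :
    MeasurableSet {ω : ι → Ω | {j | j ∈ S ∧ ω j ∈ A}.ncard = 1} := by
  classical
  rw [setOf_ncard_eq_one_eq_iUnion_onlyHit]
  exact S.measurableSet_biUnion fun j _ => measurableSet_onlyHit hA S j

end OnlyHit

section ProductMeasures

variable {ι : Type*} [Fintype ι]

theorem pow_ncard_eq_prod {Ω : ι → Type*} (A : ∀ i, Set (Ω i)) (t : ℝ) (ω : ∀ i, Ω i) :
    t ^ {i | ω i ∈ A i}.ncard = ∏ i, (1 - (1 - t) * (A i).indicator 1 (ω i)) := by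
  classical
  have factor_eq (i : ι) : 1 - (1 - t) * (A i).indicator 1 (ω i) = if ω i ∈ A i then t else 1 := by
    by_cases h : ω i ∈ A i <;> simp [h]
  simp_rw [factor_eq, Finset.prod_ite, Finset.prod_const, one_pow, mul_one]
  rw [Set.ncard_eq_toFinset_card', Set.toFinset_ofPred]

theorem integrable_one_sub_indicator {Ω : Type*} [MeasurableSpace Ω] {μ : Measure Ω}
    [IsFiniteMeasure μ] {A : Set Ω} (hA : MeasurableSet A) (a : ℝ) :
    Integrable (fun ω => 1 - a * A.indicator 1 ω) μ :=
  (integrable_const 1).sub (((integrable_const 1).indicator hA).const_mul a)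

variable {Ω : ι → Type*} [∀ i, MeasurableSpace (Ω i)] {μ : ∀ i, Measure (Ω i)}
  [∀ i, IsProbabilityMeasure (μ i)] {A : ∀ i, Set (Ω i)}

theorem integrable_pow_ncard (hA : ∀ i, MeasurableSet (A i)) (t : ℝ) :
    Integrable (fun ω => t ^ {i | ω i ∈ A i}.ncard) (Measure.pi μ) := by
  simp_rw [pow_ncard_eq_prod]
  exact .fintype_prod_dep fun i => integrable_one_sub_indicator (hA i) (1 - t)

theorem integral_pow_ncard (hA : ∀ i, MeasurableSet (A i)) (t : ℝ) :
    ∫ ω, t ^ {i | ω i ∈ A i}.ncard ∂Measure.pi μ = ∏ i, (1 - (1 - t) * (μ i).real (A i)) := by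
  simp_rw [pow_ncard_eq_prod]
  rw [integral_fintype_prod_eq_prod fun i ω => 1 - (1 - t) * (A i).indicator 1 ω]
  refine Finset.prod_congr rfl fun i _ => ?_
  rw [integral_sub (integrable_const 1) (((integrable_const 1).indicator (hA i)).const_mul _),
    integral_const_mul, integral_indicator_one (hA i)]
  simp

theorem pi_real_pi_finset (A : ∀ i, Set (Ω i)) (S : Finset ι) :
    (Measure.pi μ).real ((S : Set ι).pi A) = ∏ i ∈ S, (μ i).real (A i) := by
  simp [Measure.real, Measure.pi_pi_finset, ENNReal.toReal_prod]

theorem pi_real_ncard_eq_one {Ω : Type*} [MeasurableSpace Ω] (μ : Measure Ω)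
    [IsProbabilityMeasure μ] {A : Set Ω} (hA : MeasurableSet A) (S : Finset ι) :
    (Measure.pi fun _ : ι => μ).real {ω | {j | j ∈ S ∧ ω j ∈ A}.ncard = 1} =
      S.card * (μ.real A * (1 - μ.real A) ^ (S.card - 1)) := by
  classical
  rw [setOf_ncard_eq_one_eq_iUnion_onlyHit,
    measureReal_biUnion_finset (pairwiseDisjoint_onlyHit A S)
      fun j _ => measurableSet_onlyHit hA S j,
    ← nsmul_eq_mul]
  refine Finset.sum_eq_card_nsmul fun j hj => ?_
  simp_rw [onlyHit, pi_real_pi_finset, Function.apply_update (fun _ => μ.real)]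
  rw [Finset.prod_update_of_mem hj, Finset.prod_const, probReal_compl_eq_one_sub hA,
    Finset.sdiff_singleton_eq_erase, Finset.card_erase_of_mem hj]

end ProductMeasures

section Rows

variable {p : ℝ}

theorem isProbabilityMeasure_bernoulliR (hp0 : 0 ≤ p) (hp1 : p ≤ 1) :
    IsProbabilityMeasure (bernoulliR p) := by
  constructor
  simp [bernoulliR, ← ENNReal.ofReal_add hp0 (sub_nonneg.2 hp1)]

theorem bernoulliR_real_singleton_one (hp0 : 0 ≤ p) : (bernoulliR p).real {1} = p := by
  simp [bernoulliR, Measure.real, hp0]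

theorem bernoulliR_real_singleton_zero (hp1 : p ≤ 1) : (bernoulliR p).real {0} = 1 - p := by
  simp [bernoulliR, Measure.real, hp1]

variable {l m : ℕ}

/-- The diagonal rows of a column set `S`: the row indices that also lie in `S`. -/
def diagRows (m : ℕ) (S : Finset (Fin l)) : Finset (Fin m) :=
  {i | ∃ j ∈ S, (j : ℕ) = i}

/-- The event, for a single row `i`, that `i` is a unique neighbour of `S`. -/
def uniqueNbrEvent (S : Finset (Fin l)) (i : Fin m) : Set (Fin l → ℝ) :=
  if i ∈ diagRows m S then (S : Set (Fin l)).pi fun _ => {0}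
  else {r | {j | j ∈ S ∧ r j ∈ ({1} : Set ℝ)}.ncard = 1}

theorem uniqueNbrSet_eq_setOf_mem_uniqueNbrEvent (M : Fin m → Fin l → ℝ) (S : Finset (Fin l)) :
    uniqueNbrSet (Matrix.of M) S = {i | M i ∈ uniqueNbrEvent S i} := by
  ext i
  by_cases hi : i ∈ diagRows m S
  · have hi' : ∃ j ∈ S, (j : ℕ) = i := by simpa [diagRows] using hi
    simp [uniqueNbrSet, uniqueNbrEvent, hi, hi', Set.mem_pi]
  · have hi' : ¬ ∃ j ∈ S, (j : ℕ) = i := by simpa [diagRows] using hi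
    simp only [uniqueNbrSet, uniqueNbrEvent, hi, hi', Set.mem_ofPred_eq, Set.mem_singleton_iff,
      Matrix.of_apply, if_false, false_and, false_or, not_false_eq_true, true_and]

theorem measurableSet_uniqueNbrEvent (S : Finset (Fin l)) (i : Fin m) :
    MeasurableSet (uniqueNbrEvent S i) := by
  unfold uniqueNbrEvent
  split_ifs
  · exact .pi S.countable_toSet fun _ _ => measurableSet_singleton 0
  · exact measurableSet_setOf_ncard_eq_one (measurableSet_singleton 1) S

theorem pi_real_uniqueNbrEvent (hp0 : 0 ≤ p) (hp1 : p ≤ 1) (S : Finset (Fin l)) (i : Fin m) :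
    (Measure.pi fun _ : Fin l => bernoulliR p).real (uniqueNbrEvent S i) =
      if i ∈ diagRows m S then (1 - p) ^ S.card else S.card * (p * (1 - p) ^ (S.card - 1)) := by
  have := isProbabilityMeasure_bernoulliR hp0 hp1
  unfold uniqueNbrEvent
  split_ifs
  · rw [pi_real_pi_finset, Finset.prod_const, bernoulliR_real_singleton_zero hp1]
  · rw [pi_real_ncard_eq_one _ (measurableSet_singleton 1), bernoulliR_real_singleton_one hp0]

theorem integrable_pow_ncard_uniqueNbrSet (hp0 : 0 ≤ p) (hp1 : p ≤ 1) (t : ℝ)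
    (S : Finset (Fin l)) :
    Integrable (fun M => t ^ (uniqueNbrSet (Matrix.of M) S).ncard) (iidRectLaw m l p) := by
  have := isProbabilityMeasure_bernoulliR hp0 hp1
  simp_rw [uniqueNbrSet_eq_setOf_mem_uniqueNbrEvent]
  exact integrable_pow_ncard (measurableSet_uniqueNbrEvent S) t

theorem integral_pow_ncard_uniqueNbrSet (hp0 : 0 ≤ p) (hp1 : p ≤ 1) (t : ℝ)
    (S : Finset (Fin l)) :
    ∫ M, t ^ (uniqueNbrSet (Matrix.of M) S).ncard ∂iidRectLaw m l p =
      (1 - (1 - t) * (1 - p) ^ S.card) ^ (diagRows m S).card *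
        (1 - (1 - t) * (S.card * (p * (1 - p) ^ (S.card - 1)))) ^ (m - (diagRows m S).card) := by
  have := isProbabilityMeasure_bernoulliR hp0 hp1
  simp_rw [uniqueNbrSet_eq_setOf_mem_uniqueNbrEvent]
  rw [iidRectLaw, integral_pow_ncard (measurableSet_uniqueNbrEvent S)]
  simp_rw [pi_real_uniqueNbrEvent hp0 hp1, apply_ite (fun q => 1 - (1 - t) * q)]
  rw [Finset.prod_ite, Finset.prod_const, Finset.prod_const, Finset.filter_univ_mem,
    Finset.filter_notMem_eq_sdiff, Finset.card_univ_sdiff, Fintype.card_fin]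

theorem card_diagRows (m : ℕ) (S : Finset (Fin l)) :
    (diagRows m S).card = (S.filter fun j : Fin l => (j : ℕ) < m).card := by
  symm
  refine Finset.card_bij (fun j hj => ⟨j, (Finset.mem_filter.1 hj).2⟩) ?_ ?_ ?_
  · intro j hj
    simpa [diagRows, ← Fin.ext_iff] using (Finset.mem_filter.1 hj).1
  · intro j _ j' _ h
    simpa [Fin.ext_iff] using h
  · intro i hi
    obtain ⟨j, hj, hji⟩ := (Finset.mem_filter.1 hi).2
    exact ⟨j, Finset.mem_filter.2 ⟨hj, hji ▸ i.2⟩, Fin.ext hji⟩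

theorem card_diagRows_le (m : ℕ) (S : Finset (Fin l)) : (diagRows m S).card ≤ S.card := by
  rw [card_diagRows]
  exact Finset.card_filter_le _ _

theorem sum_ite_val_lt_le {A : ℝ} (hA : 0 ≤ A) {r : ℕ} (hl : l ≤ m + r) :
    ∑ j : Fin l, (if (j : ℕ) < m then A else 1) ≤ m * A + r := by
  calc ∑ j : Fin l, (if (j : ℕ) < m then A else 1)
      = ∑ j ∈ Finset.range l, (if j < m then A else 1) :=
        Fin.sum_univ_eq_sum_range (fun j => if j < m then A else 1) l
    _ ≤ ∑ j ∈ Finset.range (m + r), (if j < m then A else 1) :=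
        Finset.sum_le_sum_of_subset_of_nonneg (Finset.range_mono hl)
          fun j _ _ => by split_ifs <;> positivity
    _ = m * A + r := by
        rw [Finset.sum_range_add]
        simp +contextual [Finset.sum_ite_of_true]

theorem sum_pow_card_diagRows_le {A : ℝ} (hA : 0 ≤ A) {r : ℕ} (hl : l ≤ m + r) {x : ℝ}
    (hx : 0 < x) (k : ℕ) :
    ∑ S ∈ (Finset.univ : Finset (Fin l)).powersetCard k, A ^ (diagRows m S).card ≤
      Real.exp (x * (m * A + r)) / x ^ k := by
  have pow_eq_prod (S : Finset (Fin l)) :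
      A ^ (diagRows m S).card = ∏ j ∈ S, if (j : ℕ) < m then A else 1 := by
    rw [card_diagRows, Finset.prod_ite, Finset.prod_const, Finset.prod_const_one, mul_one]
  simp_rw [pow_eq_prod]
  refine (sum_powersetCard_prod_le _ (fun j => ?_) hx k).trans ?_
  · split_ifs <;> positivity
  · gcongr
    exact sum_ite_val_lt_le hA hl

end Rows

section FewUniqueNeighbours

variable {l m r k : ℕ} {p t : ℝ}

theorem one_sub_mul_le_one_sub_pow (hp1 : p ≤ 1) (k : ℕ) : 1 - k * p ≤ (1 - p) ^ k := by
  simpa [← sub_eq_add_neg] using one_add_mul_le_pow (a := -p) (by linarith) k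

theorem one_sub_mul_one_sub_pow_le (hp0 : 0 ≤ p) (hp1 : p ≤ 1) (ht0 : 0 ≤ t) (ht1 : t ≤ 1)
    (k : ℕ) : 1 - (1 - t) * (1 - p) ^ k ≤ t + k * p := by
  calc 1 - (1 - t) * (1 - p) ^ k ≤ 1 - (1 - t) * (1 - k * p) := by
        have : 0 ≤ 1 - t := sub_nonneg.2 ht1
        gcongr
        exact one_sub_mul_le_one_sub_pow hp1 k
    _ = t + k * p - t * (k * p) := by ring
    _ ≤ t + k * p := sub_le_self _ (by positivity)

theorem one_sub_mul_mul_one_sub_pow_pred_nonneg (hp0 : 0 ≤ p) (hp1 : p ≤ 1) (ht0 : 0 ≤ t)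
    (hkp : k * p ≤ 1) : 0 ≤ 1 - (1 - t) * (k * (p * (1 - p) ^ (k - 1))) := by
  have hp1' : 0 ≤ 1 - p := sub_nonneg.2 hp1
  have prob_le_one : k * (p * (1 - p) ^ (k - 1)) ≤ 1 := by
    rw [← mul_assoc]
    exact mul_le_one₀ hkp (by positivity) (pow_le_one₀ hp1' (sub_le_self 1 hp0))
  exact sub_nonneg.2 (mul_le_one₀ (sub_le_self 1 ht0) (by positivity) prob_le_one)

theorem one_sub_mul_mul_one_sub_pow_pred_le_exp (hp0 : 0 ≤ p) (hp1 : p ≤ 1) (ht1 : t ≤ 1)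
    (k : ℕ) : 1 - (1 - t) * (k * (p * (1 - p) ^ (k - 1))) ≤
      Real.exp (-((1 - t) * (k * p * (1 - k * p)))) := by
  have : 0 ≤ 1 - t := sub_nonneg.2 ht1
  calc 1 - (1 - t) * (k * (p * (1 - p) ^ (k - 1)))
      ≤ 1 - (1 - t) * (k * p * (1 - k * p)) := by
        rw [mul_assoc (k : ℝ) p]
        gcongr
        exact (one_sub_mul_le_one_sub_pow hp1 k).trans
          (pow_le_pow_of_le_one (sub_nonneg.2 hp1) (sub_le_self 1 hp0) (Nat.sub_le k 1))
    _ ≤ Real.exp (-((1 - t) * (k * p * (1 - k * p)))) := Real.one_sub_le_exp_neg _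

theorem integral_pow_ncard_uniqueNbrSet_le (hp0 : 0 ≤ p) (hp1 : p ≤ 1) (ht0 : 0 ≤ t) (ht1 : t ≤ 1)
    {S : Finset (Fin l)} (hS : S.card * p ≤ 1) :
    ∫ M, t ^ (uniqueNbrSet (Matrix.of M) S).ncard ∂iidRectLaw m l p ≤
      (t + S.card * p) ^ (diagRows m S).card *
        Real.exp (-((m - S.card) * ((1 - t) * (S.card * p * (1 - S.card * p))))) := by
  have diag_nonneg : 0 ≤ 1 - (1 - t) * (1 - p) ^ S.card :=
    sub_nonneg.2 (mul_le_one₀ (sub_le_self 1 ht0) (pow_nonneg (sub_nonneg.2 hp1) _)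
      (pow_le_one₀ (sub_nonneg.2 hp1) (sub_le_self 1 hp0)))
  have : 0 ≤ (1 - t) * (S.card * p * (1 - S.card * p)) :=
    mul_nonneg (sub_nonneg.2 ht1) (mul_nonneg (by positivity) (sub_nonneg.2 hS))
  have card_diagRows_le_rows : (diagRows m S).card ≤ m := by simpa using (diagRows m S).card_le_univ
  rw [integral_pow_ncard_uniqueNbrSet hp0 hp1]
  refine mul_le_mul
    (pow_le_pow_left₀ diag_nonneg (one_sub_mul_one_sub_pow_le hp0 hp1 ht0 ht1 S.card) _) ?_
    (pow_nonneg (one_sub_mul_mul_one_sub_pow_pred_nonneg hp0 hp1 ht0 hS) _) (by positivity)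
  calc (1 - (1 - t) * (S.card * (p * (1 - p) ^ (S.card - 1)))) ^ (m - (diagRows m S).card)
      ≤ Real.exp (-((1 - t) * (S.card * p * (1 - S.card * p)))) ^ (m - (diagRows m S).card) := by
        gcongr
        · exact one_sub_mul_mul_one_sub_pow_pred_nonneg hp0 hp1 ht0 hS
        · exact one_sub_mul_mul_one_sub_pow_pred_le_exp hp0 hp1 ht1 S.card
    _ = Real.exp (-((m - (diagRows m S).card) *
          ((1 - t) * (S.card * p * (1 - S.card * p))))) := by
        rw [← Real.exp_nat_mul, Nat.cast_sub card_diagRows_le_rows, mul_neg]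
    _ ≤ Real.exp (-((m - S.card) * ((1 - t) * (S.card * p * (1 - S.card * p))))) := by
        gcongr
        exact card_diagRows_le m S

/-- The `k`-element column sets with fewer than `X` unique neighbours. -/
def fewUniqueNbrs (M : Matrix (Fin m) (Fin l) ℝ) (k : ℕ) (X : ℝ) : Set (Finset (Fin l)) :=
  {S | S.card = k ∧ ((uniqueNbrSet M S).ncard : ℝ) < X}

theorem fewUniqueNbrs_zero (M : Matrix (Fin m) (Fin l) ℝ) (k : ℕ) :
    fewUniqueNbrs M k 0 = ∅ :=
  Set.eq_empty_of_forall_notMem fun _ hS => (Nat.cast_nonneg _).not_gt hS.2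

theorem integral_ncard_fewUniqueNbrs_le_chernoff (hp0 : 0 ≤ p) (hp1 : p ≤ 1) (ht0 : 0 < t)
    (ht1 : t ≤ 1) (hkp : k * p ≤ 1) (hl : l ≤ m + r) {x : ℝ} (hx : 0 < x) (X : ℝ) :
    ∫ M, ((fewUniqueNbrs (Matrix.of M) k X).ncard : ℝ) ∂iidRectLaw m l p ≤
      Real.exp (x * (m * (t + k * p) + r)) / x ^ k *
        Real.exp (-((m - k) * ((1 - t) * (k * p * (1 - k * p))))) *
          Real.exp (-(X * Real.log t)) := by
  calc ∫ M, ((fewUniqueNbrs (Matrix.of M) k X).ncard : ℝ) ∂iidRectLaw m l p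
      ≤ (∑ S ∈ (Finset.univ : Finset (Fin l)).powersetCard k,
          ∫ M, t ^ (uniqueNbrSet (Matrix.of M) S).ncard ∂iidRectLaw m l p) *
            Real.exp (-(X * Real.log t)) := by
        simpa only [fewUniqueNbrs, Finset.mem_powersetCard_univ] using
          integral_ncard_lt_le ((Finset.univ : Finset (Fin l)).powersetCard k)
            (fun S M => (uniqueNbrSet (Matrix.of M) S).ncard) ht0 ht1
            (fun S _ => integrable_pow_ncard_uniqueNbrSet (m := m) hp0 hp1 t S) X
    _ ≤ (∑ S ∈ (Finset.univ : Finset (Fin l)).powersetCard k,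
          (t + k * p) ^ (diagRows m S).card *
            Real.exp (-((m - k) * ((1 - t) * (k * p * (1 - k * p)))))) *
              Real.exp (-(X * Real.log t)) := by
        gcongr with S hS
        obtain rfl := Finset.mem_powersetCard_univ.1 hS
        exact integral_pow_ncard_uniqueNbrSet_le hp0 hp1 ht0.le ht1 hkp
    _ ≤ _ := by
        rw [← Finset.sum_mul]
        gcongr
        exact sum_pow_card_diagRows_le (by positivity) hl hx k

theorem mul_one_sub_three_mul_le {m k : ℝ} (hk : 0 ≤ k) (hp0 : 0 ≤ p) (hpm : 1 ≤ p * m)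
    (htk : t ≤ k * p) (hkp : k * p ≤ 1) :
    k * (p * m * (1 - 3 * (k * p))) ≤ (m - k) * ((1 - t) * (k * p * (1 - k * p))) := by
  set y := k * p with hy
  have hy0 : 0 ≤ y := by positivity
  have : 0 ≤ 1 - y := sub_nonneg.2 hkp
  have hy_pm : 0 ≤ p * m - y := sub_nonneg.2 (hkp.trans hpm)
  calc k * (p * m * (1 - 3 * y)) ≤ k * (p * m * (1 - y)) * ((1 - y) * (1 - y)) := by
        have : 0 ≤ p * m * k * (y ^ 2 * (3 - y)) := by
          have : 0 ≤ 3 - y := by linarith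
          positivity
        linarith
    _ ≤ k * (p * m - y) * ((1 - t) * (1 - y)) := by
        gcongr
        linarith [mul_le_mul_of_nonneg_right hpm hy0]
    _ = (m - k) * ((1 - t) * (y * (1 - y))) := by
        rw [hy]
        ring

theorem integral_ncard_fewUniqueNbrs_le {ε : ℝ} (hp0 : 0 < p) (hp1 : p ≤ 1) (hk : 0 < k)
    (hkp : k * p ≤ 1) (hpm : 1 ≤ p * m) (hl : l ≤ m + r) (hε0 : 0 < ε) (hε1 : ε ≤ 1) (X : ℝ) :
    ∫ M, ((fewUniqueNbrs (Matrix.of M) k X).ncard : ℝ) ∂iidRectLaw m l p ≤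
      Real.exp r * Real.exp (k * (Real.log (p * m) + 1 + ε - p * m * (1 - 3 * (k * p))) -
        X * Real.log (ε * (k * p))) := by
  have hkp0 : 0 < k * p := by positivity
  have hpm0 : 0 < p * m := by linarith
  have htk : ε * (k * p) ≤ k * p := mul_le_of_le_one_left hkp0.le hε1
  refine (integral_ncard_fewUniqueNbrs_le_chernoff (t := ε * (k * p)) hp0.le hp1 (by positivity)
    (htk.trans hkp) hkp hl (inv_pos.2 hpm0) X).trans ?_
  have weight_eq : (p * m)⁻¹ * (m * (ε * (k * p) + k * p) + r) = k * (1 + ε) + (p * m)⁻¹ * r := by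
    have : m ≠ 0 := by rintro rfl; simp at hpm0
    field_simp
    ring
  have pow_eq : ((p * m)⁻¹ ^ k)⁻¹ = Real.exp (k * Real.log (p * m)) := by
    rw [inv_pow, inv_inv, Real.exp_nat_mul, Real.exp_log hpm0]
  have extra_le : (p * m)⁻¹ * r ≤ r :=
    mul_le_of_le_one_left r.cast_nonneg (inv_le_one_of_one_le₀ hpm)
  rw [div_eq_mul_inv, pow_eq, weight_eq]
  simp_rw [← Real.exp_add]
  refine Real.exp_le_exp.2 ?_
  linarith [mul_one_sub_three_mul_le k.cast_nonneg hp0.le hpm htk hkp]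

end FewUniqueNeighbours

section Asymptotics

open Filter Topology

theorem log_le_sub_one_sub {δ d : ℝ} (hδ : 0 ≤ δ) (hd : 1 + δ ≤ d) :
    Real.log d ≤ d - 1 - (δ - Real.log (1 + δ)) := by
  have hδ1 : 0 < 1 + δ := by linarith
  have log_div_le : Real.log (d / (1 + δ)) ≤ d / (1 + δ) - 1 :=
    Real.log_le_sub_one_of_pos (div_pos (by linarith) hδ1)
  have div_le : (d - (1 + δ)) / (1 + δ) ≤ d - (1 + δ) :=
    div_le_self (by linarith) (by linarith)
  rw [Real.log_div (by linarith) hδ1.ne'] at log_div_le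
  rw [sub_div, div_self hδ1.ne'] at div_le
  linarith

theorem tendsto_log_mul_div_log_sq {a : ℝ} (ha : 0 < a) :
    Tendsto (fun x => Real.log (a * x) / Real.log x ^ 2) (𝓝[>] 0) (𝓝 0) := by
  have log_inv : Tendsto (fun x => (Real.log x)⁻¹) (𝓝[>] 0) (𝓝 0) :=
    tendsto_inv_atBot_zero.comp Real.tendsto_log_nhdsGT_zero
  have log_ne_zero : ∀ᶠ x in 𝓝[>] (0 : ℝ), Real.log x ≠ 0 :=
    Real.tendsto_log_nhdsGT_zero.eventually_ne_atBot 0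
  have limit : Tendsto (fun x => Real.log a * (Real.log x)⁻¹ ^ 2 + (Real.log x)⁻¹) (𝓝[>] 0)
      (𝓝 0) := by
    simpa using ((log_inv.pow 2).const_mul (Real.log a)).add log_inv
  refine limit.congr' ?_
  filter_upwards [log_ne_zero, self_mem_nhdsWithin] with x hx hx0
  rw [Real.log_mul ha.ne' (ne_of_gt hx0)]
  field_simp

theorem eventually_small_density_error_le (B C : ℝ) {a η : ℝ} (ha : 0 < a) (hη : 0 < η) :
    ∀ᶠ x in 𝓝[>] (0 : ℝ), C * x ≤ 1 ∧ B * x - Real.log (a * x) / Real.log x ^ 2 ≤ η := by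
  have linear (c : ℝ) : Tendsto (fun x : ℝ => c * x) (𝓝[>] 0) (𝓝 0) := by
    simpa using ((continuous_const_mul c).tendsto 0).mono_left nhdsWithin_le_nhds
  have error : Tendsto (fun x => B * x - Real.log (a * x) / Real.log x ^ 2) (𝓝[>] 0) (𝓝 0) := by
    simpa using (linear B).sub (tendsto_log_mul_div_log_sq ha)
  exact ((linear C).eventually_le_const one_pos).and (error.eventually_le_const hη)

end Asymptotics

theorem chernoff_exponent_le {δ ε κ d D K y : ℝ} (hδ : 0 ≤ δ) (hε : 0 < ε) (hκ : 0 < κ) (hK : 0 < K)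
    (hd : d ∈ Set.Icc (1 + δ) D) (hy : y ∈ Set.Icc (κ / K) (D * K * κ)) :
    Real.log d + 1 + ε - d * (1 - 3 * y) - (Real.log κ ^ 2)⁻¹ * Real.log (ε * y) ≤
      ε - (δ - Real.log (1 + δ)) +
        (3 * D * (D * K) * κ - Real.log (ε / K * κ) / Real.log κ ^ 2) := by
  have d_pos : 0 < d := by linarith [hd.1]
  have dy_le : d * y ≤ D * (D * K * κ) :=
    mul_le_mul hd.2 hy.2 ((by positivity : 0 ≤ κ / K).trans hy.1) (d_pos.le.trans hd.2)
  have log_le : (Real.log κ ^ 2)⁻¹ * Real.log (ε / K * κ) ≤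
      (Real.log κ ^ 2)⁻¹ * Real.log (ε * y) := by
    rw [div_mul_eq_mul_div, mul_div_assoc]
    gcongr
    exact hy.1
  rw [div_eq_inv_mul (Real.log (ε / K * κ))]
  linarith [log_le_sub_one_sub hδ hd.1]

theorem mul_mem_Icc_of_ratio_mem_Icc {n m k p D K : ℝ} (hn : 0 < n) (hk : 0 ≤ k) (hK : 0 < K)
    (hmn : m / n ∈ Set.Icc K⁻¹ K) (hpm : p * m ∈ Set.Icc 1 D) :
    k * p ∈ Set.Icc (k / n / K) (D * K * (k / n)) := by
  have ratio_pos : 0 < m / n := (inv_pos.2 hK).trans_le hmn.1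
  have pm_pos : 0 < p * m := one_pos.trans_le hpm.1
  have kp_eq : k * p = p * m * (k / n) / (m / n) := by
    have : m ≠ 0 := by rintro rfl; simp at ratio_pos
    field_simp
  have D_nonneg : 0 ≤ D := pm_pos.le.trans hpm.2
  rw [kp_eq]
  constructor
  · calc k / n / K = 1 * (k / n) / K := by rw [one_mul]
      _ ≤ p * m * (k / n) / (m / n) := by
        gcongr
        exacts [hpm.1, hmn.2]
  · calc p * m * (k / n) / (m / n) ≤ D * (k / n) / K⁻¹ := by
          gcongr
          exacts [hpm.2, hmn.1]
      _ = D * K * (k / n) := by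
          rw [div_inv_eq_mul]
          ring

theorem alphaFn_eq (n : ℕ) (x : ℝ) : alphaFn n x = (Real.log (x / n) ^ 2)⁻¹ := by
  rw [alphaFn, ← inv_div x, Real.log_inv, neg_sq]

theorem integral_ncard_fewUniqueNbrs_alphaFn_le {n m l r k : ℕ} {p δ ε D K : ℝ} (hδ : 0 ≤ δ)
    (hε0 : 0 < ε) (hε1 : ε ≤ 1) (hK : 0 < K) (hn : 0 < n) (hk : 0 < k) (hl : l ≤ m + r)
    (hmn : (m : ℝ) / n ∈ Set.Icc K⁻¹ K) (hpm : p * m ∈ Set.Icc (1 + δ) D)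
    (hkn : D * K * (k / n) ≤ 1) :
    ∫ M, ((fewUniqueNbrs (Matrix.of M) k (alphaFn n k * k)).ncard : ℝ) ∂iidRectLaw m l p ≤
      Real.exp r * Real.exp (k * (ε - (δ - Real.log (1 + δ)) +
        (3 * D * (D * K) * (k / n) -
          Real.log (ε / K * (k / n)) / Real.log (k / n) ^ 2))) := by
  have one_le_pm : 1 ≤ p * m := by linarith [hpm.1]
  have kp_mem : k * p ∈ Set.Icc (k / n / K : ℝ) (D * K * (k / n)) :=
    mul_mem_Icc_of_ratio_mem_Icc (Nat.cast_pos.2 hn) k.cast_nonneg hK hmn ⟨one_le_pm, hpm.2⟩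
  have kp_le_one : k * p ≤ 1 := kp_mem.2.trans hkn
  have p_pos : 0 < p := pos_of_mul_pos_left (one_pos.trans_le one_le_pm) m.cast_nonneg
  have p_le_one : p ≤ 1 :=
    (le_mul_of_one_le_left p_pos.le (Nat.one_le_cast.2 hk)).trans kp_le_one
  refine (integral_ncard_fewUniqueNbrs_le p_pos p_le_one hk kp_le_one one_le_pm hl hε0 hε1
    _).trans ?_
  rw [alphaFn_eq, mul_comm _ (k : ℝ), mul_assoc (k : ℝ), ← mul_sub]
  gcongr
  exact chernoff_exponent_le hδ hε0 (by positivity) hK hpm kp_mem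

theorem unique_neighbour_expansion_iid_general {δ K : ℝ} (hδ : 0 < δ) (hK : 0 < K) :
    ∃ c : ℝ, 0 < c ∧
      ∀ (n m l r : ℕ) (p : ℝ), l ≤ m + r → (m : ℝ) / n ∈ Set.Icc K⁻¹ K →
        p * m ∈ Set.Icc (1 + δ) δ⁻¹ →
        ∀ k : ℕ, (k : ℝ) ≤ c * n →
          ∫ M, ((fewUniqueNbrs (Matrix.of M) k (alphaFn n k * k)).ncard : ℝ) ∂iidRectLaw m l p ≤
            Real.exp r * Real.exp (-(c * k)) := by
  set η := δ - Real.log (1 + δ)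
  have η_pos : 0 < η := by
    linarith [Real.log_lt_sub_one_of_pos (x := 1 + δ) (by linarith) (by linarith)]
  set ε := min 1 (η / 4)
  have ε_pos : 0 < ε := by positivity
  obtain ⟨u, u_pos, hu⟩ := mem_nhdsGT_iff_exists_Ioc_subset.1
    (eventually_small_density_error_le (3 * δ⁻¹ * (δ⁻¹ * K)) (δ⁻¹ * K)
      (div_pos ε_pos hK) (half_pos η_pos))
  refine ⟨min u (η / 4), lt_min u_pos (by positivity), fun n m l r p hl hmn hpm k hk => ?_⟩
  obtain rfl | k_pos := k.eq_zero_or_pos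
  · simp [fewUniqueNbrs_zero, Real.exp_nonneg]
  have n_pos : 0 < n := by
    refine Nat.pos_of_ne_zero fun hn => ?_
    simpa [hn, hK.not_ge] using hmn.1
  have density_le : (k : ℝ) / n ≤ u :=
    ((div_le_iff₀ (by positivity)).2 hk).trans (min_le_left _ _)
  obtain ⟨density_small, error_le⟩ := hu ⟨by positivity, density_le⟩
  refine (integral_ncard_fewUniqueNbrs_alphaFn_le hδ.le ε_pos (min_le_left _ _) hK n_pos k_pos hl
    hmn hpm density_small).trans ?_
  rw [mul_comm (min u (η / 4)), ← mul_neg]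
  gcongr
  linarith [min_le_right u (η / 4), min_le_right 1 (η / 4)]

theorem unique_neighbour_expansion_iid (δ : ℝ) (hδ : 0 < δ) :
    ∃ c : ℝ, 0 < c ∧ ∃ C : ℝ, 0 < C ∧
      ∀ (n m l : ℕ) (p : ℝ), 0 < n → (l = m ∨ l = m + 1) →
        (m : ℝ) / n ∈ Set.Icc (1 / 2 : ℝ) 2 →
        p * m ∈ Set.Icc (1 + δ) δ⁻¹ →
        ∀ k : ℕ, (k : ℝ) ≤ c * n →
          (∫ M, (({S : Finset (Fin l) | S.card = k ∧
              ((uniqueNbrSet (Matrix.of M) S).ncard : ℝ) < alphaFn n k * k}).ncard : ℝ)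
            ∂(iidRectLaw m l p)) ≤ C * Real.exp (-(c * k)) := by
  obtain ⟨c, hc, bound⟩ := unique_neighbour_expansion_iid_general hδ two_pos
  refine ⟨c, hc, Real.exp 1, Real.exp_pos 1, fun n m l p _ hl hmn hpm k hk => ?_⟩
  simpa [fewUniqueNbrs] using bound n m l 1 p (by omega) (by rwa [← one_div]) hpm k hk
end
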